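/- arXiv:2005.07189 — 9 statements merged into one kernel-verified Lean document; each statement's English description precedes it below -/
import Mathlib

section
/- For every state ω on a unital complex C*-algebra A there exist a complex Hilbert space H, a unital star-algebra homomorphism π from A into the bounded linear operators on H, and a vector Ω ∈ H such that ω(a) = ⟪Ω, π(a) Ω⟫ for every a ∈ A and the set {π(a) Ω : a ∈ A} spans a dense subspace of H (i.e. Ω is a cyclic vector for the range of π). -/
open scoped InnerProductSpace ComplexOrder

/-!
The Hilbert space is the completion of `A` under the semi-inner product `⟪a, b⟫ = ω (star a * b)`,
and `π a` extends left multiplication by `a`; Mathlib's `PositiveLinearMap.gnsStarAlgHom` provides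
this for a functional that is monotone for the C⋆-order. A state is monotone because every
nonnegative element has the form `star b * b`. The cyclic vector `Ω` is the class of `1`: then
`π a Ω` is the class of `a`, so `⟪Ω, π a Ω⟫ = ω (star 1 * a) = ω a`, and the orbit of `Ω` is the
image of `A`, which is dense in the completion.
-/

/-- The vector of the GNS space represented by `1` is carried by `a` to the vector
represented by `a`. -/
lemma gnsStarAlgHom_apply_one {A : Type*} [CStarAlgebra A] [PartialOrder A] [StarOrderedRing A]
    (f : A →ₚ[ℂ] ℂ) (a : A) :
    f.gnsStarAlgHom a ((f.toPreGNS 1 : f.PreGNS) : f.GNS) = ((f.toPreGNS a : f.PreGNS) : f.GNS) := by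
  change f.gnsNonUnitalStarAlgHom a _ = _
  simp

/-- **GNS representation theorem.** For every state `ω` on a unital complex C*-algebra `A`
there exist a complex Hilbert space `H`, a unital star-algebra homomorphism `π` from `A` into
the bounded linear operators on `H`, and a vector `Ω ∈ H` such that
`ω a = ⟪Ω, π a Ω⟫` for all `a`, and `{π a Ω : a ∈ A}` spans a dense subspace of `H`. -/
theorem gns_representation
    (A : Type) [NormedRing A] [StarRing A] [CStarRing A] [NormedAlgebra ℂ A]
    [StarModule ℂ A] [CompleteSpace A] [NormOneClass A]
    (ω : A →ₗ[ℂ] ℂ) (hω_one : ω 1 = 1) (hω_pos : ∀ a : A, 0 ≤ ω (star a * a)) :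
    ∃ (H : Type) (_ : NormedAddCommGroup H) (_ : InnerProductSpace ℂ H)
      (_ : CompleteSpace H) (π : A →⋆ₐ[ℂ] (H →L[ℂ] H)) (Ω : H),
      (∀ a : A, ω a = ⟪Ω, π a Ω⟫_ℂ) ∧
      Dense (↑(Submodule.span ℂ (Set.range fun a : A => π a Ω)) : Set H) := by
  letI : CStarAlgebra A := { }
  letI : PartialOrder A := CStarAlgebra.spectralOrder A
  haveI : StarOrderedRing A := CStarAlgebra.spectralOrderedRing A
  let f : A →ₚ[ℂ] ℂ := PositiveLinearMap.mk₀ ω fun a ha => by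
    obtain ⟨b, rfl⟩ := CStarAlgebra.nonneg_iff_eq_star_mul_self.mp ha
    exact hω_pos b
  refine ⟨f.GNS, inferInstance, inferInstance, inferInstance, f.gnsStarAlgHom,
    ((f.toPreGNS 1 : f.PreGNS) : f.GNS), fun a => ?_, ?_⟩
  · rw [gnsStarAlgHom_apply_one, UniformSpace.Completion.inner_coe,
      PositiveLinearMap.preGNS_inner_def]
    simp only [PositiveLinearMap.ofPreGNS_toPreGNS, star_one, one_mul]
    rfl
  · refine Dense.mono Submodule.subset_span ?_
    simp only [gnsStarAlgHom_apply_one]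
    exact UniformSpace.Completion.denseRange_coe.comp f.toPreGNS.surjective.denseRange
      (UniformSpace.Completion.continuous_coe _)
end

section
/- Let H be a complex Hilbert space, A a star-subalgebra of the bounded operators on H, and x a bounded operator with ‖x‖ ≤ 1 that lies in the closure of A in the strong operator topology, i.e. for every ε > 0 and every finite family of vectors ξ_1, …, ξ_n ∈ H there exists a ∈ A with ‖(a − x) ξ_i‖ < ε for all i. Then for every ε > 0 and every finite family ξ_1, …, ξ_n ∈ H there exists a ∈ A with ‖a‖ ≤ 1 and ‖(a − x) ξ_i‖ < ε for all i. (Kaplansky density theorem: the unit ball of A is dense in the unit ball of its strong-operator closure.) -/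
/-!
The proof avoids both a reduction to self-adjoint operators and `2 × 2` matrices. Let
`F b = 2 b (1 + b* b)⁻¹`, which always has norm at most `1`.

* Every contraction is a value of `F`: with `y = x (1 + √(1 - x* x))⁻¹` one has `F y = x`
  (`exists_preimage`), and `y` lies in every norm-closed star-subalgebra containing `x`.
* The strong-operator closure of `A` is a norm-closed star-subalgebra (`sotClosure`), so it contains
  `y`. Stability under `star` is the nontrivial point, since the adjoint is not strongly continuous.
  It follows from Hahn-Banach: `a ↦ ⟪w, a* η⟫ = ⟪a w, η⟫` is strongly continuous, so `y` can even be
  approximated by `b ∈ A` with `b → y` and `b* → y*` strongly at the same time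
  (`SOTAdherent.strongStar`).
* By `resolvent_identity`, `F b - F y` is a sum of two terms in which `b - y` and `y* - b*` are
  applied to vectors that depend only on `y`, with uniformly bounded factors on the left. Hence
  `F b` is strongly close to `F y = x`.

If `A` is norm-closed then `F b ∈ A` (`kaplansky_closed`). In general `F b` lies in the norm closure
of `A`, and an element of `A` that is norm-close to it is rescaled into the unit ball.
-/

/-! ### Functional calculus in a C*-algebra -/

section CStar
variable {C : Type*} [CStarAlgebra C]

/-- The inverse `R` of `1 + b* b`, with the bounds that make `b ↦ 2 b R` a map into the unit ball.
Although `R` itself need not belong to a non-unital subalgebra containing `b`, the product `b R`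
does when the subalgebra is norm-closed. -/
theorem exists_resolvent (b : C) :
    ∃ R : C, R * (1 + star b * b) = 1 ∧ (1 + star b * b) * R = 1 ∧ ‖R‖ ≤ 1 ∧ ‖b * R‖ ≤ 1 / 2 ∧
      ∀ S : NonUnitalStarSubalgebra ℂ C, IsClosed (S : Set C) → b ∈ S → b * R ∈ S := by
  have hsa : IsSelfAdjoint (star b * b) := .star_mul_self b
  have hspec : ∀ t ∈ spectrum ℝ (star b * b), 0 ≤ t := spectrum_star_mul_self_nonneg
  -- `|t|` makes `f` continuous on all of `ℝ`; on the spectrum `|t| = t`.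
  obtain ⟨f, hf, hft⟩ : ∃ f : ℝ → ℝ, Continuous f ∧ ∀ t, f t = (1 + |t|)⁻¹ := by
    have hpos : ∀ t : ℝ, 1 + |t| ≠ 0 := fun t => by positivity
    exact ⟨_, by fun_prop (disch := assumption), fun _ => rfl⟩
  have hT : 1 + star b * b = cfc (fun t : ℝ => 1 + t) (star b * b) := by
    rw [cfc_const_add (1 : ℝ) (fun t => t) (star b * b), cfc_id' ℝ (star b * b), map_one]
  set R := cfc f (star b * b) with hR
  have hRs : star R = R := (cfc_predicate _ _ : IsSelfAdjoint R)
  refine ⟨R, ?_, ?_, ?_, ?_, ?_⟩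
  · rw [hT, hR, ← cfc_mul .., ← cfc_one ℝ (star b * b)]
    refine cfc_congr fun t ht => ?_
    have := hspec t ht
    simp only [hft, abs_of_nonneg this, Pi.one_apply]
    field_simp
  · rw [hT, hR, ← cfc_mul .., ← cfc_one ℝ (star b * b)]
    refine cfc_congr fun t ht => ?_
    have := hspec t ht
    simp only [hft, abs_of_nonneg this, Pi.one_apply]
    field_simp
  · refine norm_cfc_le zero_le_one fun t ht => ?_
    rw [hft, Real.norm_of_nonneg (by positivity)]
    exact inv_le_one_of_one_le₀ (by simp)
  · have h1 : star (b * R) * (b * R)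
        = cfc (fun t : ℝ => f t * (t * f t)) (star b * b) := by
      rw [cfc_mul .., cfc_mul .., cfc_id' ℝ (star b * b), star_mul, hRs]
      simp only [mul_assoc, hR]
    have h2 : ‖star (b * R) * (b * R)‖ ≤ 1 / 4 := by
      rw [h1]
      refine norm_cfc_le (by norm_num) fun t ht => ?_
      have := hspec t ht
      rw [hft, abs_of_nonneg this, Real.norm_of_nonneg (by positivity), ← mul_assoc, mul_comm _ t,
        mul_assoc, ← mul_inv, ← div_eq_mul_inv, div_le_div_iff₀ (by positivity) (by norm_num)]
      nlinarith [sq_nonneg (t - 1)]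
    rw [CStarRing.norm_star_mul_self] at h2
    nlinarith [norm_nonneg (b * R)]
  · intro S hS hb
    -- The function `1 - f` vanishes at `0`, so its calculus stays in non-unital subalgebras.
    have h1 : R = 1 - cfcₙ (fun t : ℝ => 1 - f t) (star b * b) := by
      rw [cfcₙ_eq_cfc (by fun_prop) (by simp [hft]), cfc_sub .., cfc_const_one ℝ (star b * b), hR]
      abel
    have := hS
    rw [h1, mul_sub, mul_one]
    exact sub_mem hb (mul_mem hb (cfcₙ_mem (𝕜' := ℂ) _ (mul_mem (star_mem hb) hb)))

/-- Every contraction `x` has the form `2 y (1 + y* y)⁻¹`, where `y = x (1 + √(1 - x* x))⁻¹`. -/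
theorem exists_preimage (x : C) (hx : ‖x‖ ≤ 1) :
    ∃ y : C, x * (1 + star y * y) = 2 • y ∧
      ∀ S : NonUnitalStarSubalgebra ℂ C, IsClosed (S : Set C) → x ∈ S → y ∈ S := by
  have hsa : IsSelfAdjoint (star x * x) := .star_mul_self x
  have hspec : ∀ t ∈ spectrum ℝ (star x * x), t ≤ 1 := by
    intro t ht
    cases subsingleton_or_nontrivial C
    · simp at ht
    · have h1 := spectrum.norm_le_norm_of_mem ht
      rw [CStarRing.norm_star_mul_self] at h1
      have := le_abs_self t
      rw [Real.norm_eq_abs] at h1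
      nlinarith [norm_nonneg x]
  have hpos : ∀ t : ℝ, 1 + √(1 - t) ≠ 0 := fun t => by positivity
  obtain ⟨f, hf, hft⟩ : ∃ f : ℝ → ℝ, Continuous f ∧ ∀ t, f t = (1 + √(1 - t))⁻¹ :=
    ⟨_, by fun_prop (disch := assumption), fun _ => rfl⟩
  set d := cfc f (star x * x) with hd
  have hds : star d = d := (cfc_predicate _ _ : IsSelfAdjoint d)
  refine ⟨x * d, ?_, ?_⟩
  · have h1 : star (x * d) * (x * d)
        = cfc (fun t : ℝ => f t * (t * f t)) (star x * x) := by
      rw [cfc_mul .., cfc_mul .., cfc_id' ℝ (star x * x), star_mul, hds]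
      simp only [mul_assoc, hd]
    have h2 : 1 + star (x * d) * (x * d) = d + d := by
      rw [h1, hd, ← cfc_add .., ← cfc_const_one ℝ (star x * x), ← cfc_add ..]
      refine cfc_congr fun t ht => ?_
      have h3 := Real.sq_sqrt (sub_nonneg.2 (hspec t ht))
      have h4 := hpos t
      simp only [hft]
      field_simp
      nlinarith
    rw [h2, two_smul, mul_add]
  · intro S hS hb
    -- The constant `1 / 2` is `f 0`, so that `f - 1 / 2` vanishes at `0`.
    have h1 : d = (1 / 2 : ℂ) • 1
        + cfcₙ (fun t : ℝ => f t - 1 / 2) (star x * x) := by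
      rw [cfcₙ_eq_cfc (by fun_prop) (by norm_num [hft]), cfc_sub .., hd,
        cfc_const (1 / 2 : ℝ) (star x * x), Algebra.algebraMap_eq_smul_one]
      rw [← Complex.coe_smul]
      push_cast
      abel
    have := hS
    rw [h1, mul_add, mul_smul_comm, mul_one]
    exact add_mem (S.smul_mem _ hb) (mul_mem hb (cfcₙ_mem (𝕜' := ℂ) _ (mul_mem (star_mem hb) hb)))

/-- Here `R`, `Q`, `R'` are the inverses of `1 + y* y`, `1 + b* b`, `1 + b b*`; only the one-sided
inverse relations that are used are assumed. -/
theorem resolvent_identity {b y R R' Q : C} (hR : (1 + star y * y) * R = 1)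
    (hQ : (1 + star b * b) * Q = 1) (hR' : R' * (1 + b * star b) = 1) :
    b * Q - y * R = R' * ((b - y) * R) + b * Q * ((star y - star b) * (y * R)) := by
  have h1 : b * Q = R' * b :=
    calc b * Q = R' * (1 + b * star b) * (b * Q) := by rw [hR', one_mul]
      _ = R' * b * ((1 + star b * b) * Q) := by noncomm_ring
      _ = R' * b := by rw [hQ, mul_one]
  calc b * Q - y * R
      = R' * b * ((1 + star y * y) * R) - R' * (1 + b * star b) * (y * R) := by
        rw [hR, hR', h1, mul_one, one_mul]
    _ = R' * ((b - y) * R) + R' * b * ((star y - star b) * (y * R)) := by noncomm_ring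
    _ = _ := by rw [h1]
end CStar

/-! ### The strong-operator closure of a star-subalgebra -/

section SOT
variable {H : Type*} [NormedAddCommGroup H] [InnerProductSpace ℂ H] [CompleteSpace H]

/-- `x` lies in the strong-operator closure of `A`; finite families of vectors are encoded as
finsets. -/
def SOTAdherent (A : NonUnitalStarSubalgebra ℂ (H →L[ℂ] H)) (x : H →L[ℂ] H) : Prop :=
  ∀ ε > (0 : ℝ), ∀ s : Finset H, ∃ a ∈ A, ∀ ξ ∈ s, ‖(a - x) ξ‖ < ε

variable {A : NonUnitalStarSubalgebra ℂ (H →L[ℂ] H)} {x y : H →L[ℂ] H}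

/-- Riesz representation of a real-linear functional on a complex Hilbert space. -/
theorem exists_re_inner_eq (g : StrongDual ℝ H) : ∃ w : H, ∀ z, g z = (inner ℂ w z).re := by
  let := InnerProductSpace.rclikeToReal ℂ H
  exact ⟨(InnerProductSpace.toDual ℝ H).symm g, fun z =>
    (InnerProductSpace.toDual_symm_apply (𝕜 := ℝ) (x := z) (y := g)).symm⟩

/-- Strong-operator adherent points of `A` are also adherent for the strong-* topology. The set
of all `(a ξ, a* η)` with `a ∈ A` is convex, and a real functional separating `(x ξ, x* η)` from
its closure would, as a function of `a`, be strong-operator continuous. -/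
theorem SOTAdherent.strongStar (hx : SOTAdherent A x) {ε : ℝ} (hε : 0 < ε) (s t : Finset H) :
    ∃ a ∈ A, (∀ ξ ∈ s, ‖(a - x) ξ‖ < ε) ∧ ∀ η ∈ t, ‖(star a - star x) η‖ < ε := by
  classical
  let T : (H →L[ℂ] H) →ₗ[ℝ] (s → H) × (t → H) :=
    { toFun := fun a => (fun i => a i, fun j => star a j)
      map_add' := fun a b => by ext <;> simp
      map_smul' := fun r a => by ext <;> simp }
  have key : T x ∈ closure (T '' (A : Set (H →L[ℂ] H))) := by
    by_contra hnot
    have hconv : Convex ℝ (A : Set (H →L[ℂ] H)) := by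
      intro a ha b hb p q _ _ _
      rw [← Complex.coe_smul, ← Complex.coe_smul]
      exact add_mem (A.smul_mem _ ha) (A.smul_mem _ hb)
    obtain ⟨f, u, hfu, hux⟩ := geometric_hahn_banach_closed_point
      (hconv.linear_image T).closure isClosed_closure hnot
    choose w hw using fun j : t => exists_re_inner_eq
      ((f.comp (ContinuousLinearMap.inr ℝ (s → H) (t → H))).comp
        (ContinuousLinearMap.single ℝ (fun _ : t => H) j))
    have hfr : ∀ q : t → H, f (0, q) = ∑ j, (inner ℂ (w j) (q j)).re := by
      intro q
      calc f (0, q) = (f.comp (ContinuousLinearMap.inr ℝ (s → H) (t → H))) q := rfl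
        _ = ∑ j, (f.comp (ContinuousLinearMap.inr ℝ (s → H) (t → H))) (Pi.single j (q j)) := by
          rw [← map_sum, Finset.univ_sum_single]
        _ = _ := Finset.sum_congr rfl fun j _ => hw j (q j)
    -- `f (T b)` depends only on the values of `b`, not of its adjoint, at the points of `s` and
    -- at the Riesz vectors `w j`.
    let G : (s → H) × (t → H) → ℝ := fun p => f (p.1, 0) + ∑ j : t, (inner ℂ (p.2 j) (j : H)).re
    have hG : Continuous G := by fun_prop
    have hfG : ∀ b : H →L[ℂ] H, f (T b) = G (fun i => b i, fun j => b (w j)) := by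
      intro b
      have h1 : T b = (fun i : s => b i, 0) + (0, fun j : t => star b (j : H)) := by
        ext <;> simp [T]
      rw [h1, map_add, hfr]
      simp only [G, ContinuousLinearMap.star_eq_adjoint, ContinuousLinearMap.adjoint_inner_right]
    rw [hfG] at hux
    obtain ⟨δ, hδ, hball⟩ := Metric.isOpen_iff.1 (isOpen_lt continuous_const hG) _ hux
    obtain ⟨a, ha, hax⟩ := hx δ hδ (s ∪ Finset.univ.image w)
    have h1 : u < G (fun i => a i, fun j => a (w j)) := by
      apply hball
      rw [Metric.mem_ball, Prod.dist_eq, max_lt_iff, dist_pi_lt_iff hδ, dist_pi_lt_iff hδ]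
      refine ⟨fun i => ?_, fun j => ?_⟩
      · rw [dist_eq_norm]
        exact hax _ (Finset.mem_union_left _ i.2)
      · rw [dist_eq_norm]
        exact hax _ (Finset.mem_union_right _ (Finset.mem_image_of_mem _ (Finset.mem_univ j)))
    rw [← hfG] at h1
    exact (hfu _ (subset_closure ⟨a, ha, rfl⟩)).not_gt h1
  obtain ⟨_, ⟨a, ha, rfl⟩, hd⟩ := Metric.mem_closure_iff.1 key ε hε
  rw [dist_comm, Prod.dist_eq, max_lt_iff, dist_pi_lt_iff hε, dist_pi_lt_iff hε] at hd
  refine ⟨a, ha, fun ξ hξ => ?_, fun η hη => ?_⟩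
  · simpa [T, dist_eq_norm] using hd.1 ⟨ξ, hξ⟩
  · simpa [T, dist_eq_norm] using hd.2 ⟨η, hη⟩

theorem SOTAdherent.add (hx : SOTAdherent A x) (hy : SOTAdherent A y) :
    SOTAdherent A (x + y) := by
  intro ε hε s
  obtain ⟨a, ha, hax⟩ := hx (ε / 2) (half_pos hε) s
  obtain ⟨b, hb, hby⟩ := hy (ε / 2) (half_pos hε) s
  refine ⟨a + b, add_mem ha hb, fun ξ hξ => ?_⟩
  rw [add_sub_add_comm, add_apply]
  linarith [norm_add_le ((a - x) ξ) ((b - y) ξ), hax ξ hξ, hby ξ hξ]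

theorem SOTAdherent.smul (c : ℂ) (hx : SOTAdherent A x) : SOTAdherent A (c • x) := by
  intro ε hε s
  obtain ⟨a, ha, hax⟩ := hx (ε / (‖c‖ + 1)) (by positivity) s
  refine ⟨c • a, A.smul_mem c ha, fun ξ hξ => ?_⟩
  have h := hax ξ hξ
  rw [lt_div_iff₀ (by positivity)] at h
  rw [← smul_sub, smul_apply, norm_smul]
  nlinarith [norm_nonneg ((a - x) ξ)]

theorem SOTAdherent.mul (hx : SOTAdherent A x) (hy : SOTAdherent A y) :
    SOTAdherent A (x * y) := by
  classical
  intro ε hε s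
  obtain ⟨a, ha, hax⟩ := hx (ε / 2) (half_pos hε) (s.image y)
  obtain ⟨b, hb, hby⟩ := hy (ε / (2 * (‖a‖ + 1))) (by positivity) s
  refine ⟨a * b, mul_mem ha hb, fun ξ hξ => ?_⟩
  have h1 := hax (y ξ) (Finset.mem_image_of_mem _ hξ)
  have h2 := hby ξ hξ
  rw [lt_div_iff₀ (by positivity)] at h2
  have h3 : (a * b - x * y) ξ = (a - x) (y ξ) + a ((b - y) ξ) := by simp
  rw [h3]
  have h4 := a.le_opNorm ((b - y) ξ)
  nlinarith [norm_add_le ((a - x) (y ξ)) (a ((b - y) ξ)), norm_nonneg ((b - y) ξ)]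

variable (A) in
/-- The strong-operator closure of `A`, as a star-subalgebra. -/
def sotClosure : NonUnitalStarSubalgebra ℂ (H →L[ℂ] H) where
  carrier := {x | SOTAdherent A x}
  add_mem' := SOTAdherent.add
  zero_mem' := fun ε hε _ => ⟨0, zero_mem A, by simpa using fun _ _ => hε⟩
  mul_mem' := SOTAdherent.mul
  smul_mem' := fun c _ hx => hx.smul c
  star_mem' := fun hx ε hε s => by
    obtain ⟨a, ha, -, h⟩ := SOTAdherent.strongStar hx hε ∅ s
    exact ⟨star a, star_mem ha, h⟩

theorem isClosed_sotClosure : IsClosed (sotClosure A : Set (H →L[ℂ] H)) := by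
  refine isClosed_of_closure_subset fun x hx ε hε s => ?_
  set K := ∑ ξ ∈ s, ‖ξ‖
  have hK : 0 ≤ K := Finset.sum_nonneg fun _ _ => norm_nonneg _
  obtain ⟨y, hy, hxy⟩ := Metric.mem_closure_iff.1 hx (ε / (2 * (K + 1))) (by positivity)
  obtain ⟨a, ha, hay⟩ := (hy : SOTAdherent A y) (ε / 2) (half_pos hε) s
  refine ⟨a, ha, fun ξ hξ => ?_⟩
  have h1 : ‖ξ‖ ≤ K := Finset.single_le_sum (fun i _ => norm_nonneg i) hξ
  rw [dist_comm, dist_eq_norm, lt_div_iff₀ (by positivity)] at hxy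
  have h2 := (y - x).le_opNorm ξ
  have h3 : (a - x) ξ = (a - y) ξ + (y - x) ξ := by simp
  rw [h3]
  nlinarith [norm_add_le ((a - y) ξ) ((y - x) ξ), hay ξ hξ, norm_nonneg (y - x)]

/-! ### The density theorem -/

/-- The density theorem for norm-closed `A`, where no final rescaling is needed. -/
theorem kaplansky_closed (hA : IsClosed (A : Set (H →L[ℂ] H))) (hx : ‖x‖ ≤ 1)
    (h : SOTAdherent A x) {ε : ℝ} (hε : 0 < ε) (s : Finset H) :
    ∃ a ∈ A, ‖a‖ ≤ 1 ∧ ∀ ξ ∈ s, ‖(a - x) ξ‖ < ε := by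
  classical
  obtain ⟨y, hyx, hy⟩ := exists_preimage x hx
  have hyA : SOTAdherent A y := hy (sotClosure A) isClosed_sotClosure h
  obtain ⟨R, -, hR, -, -, -⟩ := exists_resolvent y
  have hxR : x = (2 : ℂ) • (y * R) := by
    calc x = x * ((1 + star y * y) * R) := by rw [hR, mul_one]
      _ = (2 : ℂ) • (y * R) := by rw [← mul_assoc, hyx, two_smul, two_smul, add_mul]
  obtain ⟨b, hb, hb1, hb2⟩ := hyA.strongStar (ε := ε / 3) (by positivity)
    (s.image R) (s.image (y * R))
  obtain ⟨Q, -, hQ, -, hbQ, hQA⟩ := exists_resolvent b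
  obtain ⟨R', hR', -, hR'n, -, -⟩ := exists_resolvent (star b)
  rw [star_star] at hR'
  refine ⟨(2 : ℂ) • (b * Q), A.smul_mem _ (hQA A hA hb), ?_, fun ξ hξ => ?_⟩
  · rw [norm_smul, Complex.norm_ofNat]
    linarith
  · have h1 := hb1 _ (Finset.mem_image_of_mem R hξ)
    have h2 := hb2 _ (Finset.mem_image_of_mem (y * R) hξ)
    rw [← norm_neg, ← neg_apply, neg_sub] at h2
    have h3 := R'.le_of_opNorm_le hR'n ((b - y) (R ξ))
    have h4 := (b * Q).le_of_opNorm_le hbQ ((star y - star b) ((y * R) ξ))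
    have h5 : ((2 : ℂ) • (b * Q) - x) ξ
        = (2 : ℂ) • (R' ((b - y) (R ξ)) + (b * Q) ((star y - star b) ((y * R) ξ))) := by
      rw [hxR, ← smul_sub, resolvent_identity hR hQ hR']
      rfl
    rw [h5, norm_smul, Complex.norm_ofNat]
    linarith [norm_add_le (R' ((b - y) (R ξ))) ((b * Q) ((star y - star b) ((y * R) ξ)))]
end SOT

/-- **Kaplansky density theorem.** If a contraction `x` lies in the strong-operator closure of a
star-subalgebra `A` of the bounded operators on a complex Hilbert space `H`, then `x` can be
strong-operator approximated by elements of `A` of norm at most one: the unit ball of `A` is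
strong-operator dense in the unit ball of the strong-operator closure of `A`. -/
theorem kaplansky_density
    {H : Type*} [NormedAddCommGroup H] [InnerProductSpace ℂ H] [CompleteSpace H]
    (A : NonUnitalStarSubalgebra ℂ (H →L[ℂ] H))
    (x : H →L[ℂ] H) (hx : ‖x‖ ≤ 1)
    (hclosure : ∀ ε > (0 : ℝ), ∀ (n : ℕ) (ξ : Fin n → H),
      ∃ a ∈ A, ∀ i, ‖(a - x) (ξ i)‖ < ε) :
    ∀ ε > (0 : ℝ), ∀ (n : ℕ) (ξ : Fin n → H),
      ∃ a ∈ A, ‖a‖ ≤ 1 ∧ ∀ i, ‖(a - x) (ξ i)‖ < ε := by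
  classical
  intro ε hε n ξ
  have hadh : SOTAdherent A.topologicalClosure x := by
    intro δ hδ s
    obtain ⟨a, ha, h⟩ := hclosure δ hδ s.card fun i => s.equivFin.symm i
    refine ⟨a, A.le_topologicalClosure ha, fun η hη => ?_⟩
    simpa using h (s.equivFin ⟨η, hη⟩)
  obtain ⟨c, hc, hc1, hcx⟩ := kaplansky_closed A.isClosed_topologicalClosure hx hadh
    (half_pos hε) (Finset.univ.image ξ)
  -- An element of `A` within `δ` of `c` has norm at most `1 + δ`; dividing it by `1 + δ` moves it
  -- by at most `δ`.
  set K := ∑ i, ‖ξ i‖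
  have hK : 0 ≤ K := Finset.sum_nonneg fun _ _ => norm_nonneg _
  set δ := ε / (4 * (K + 1)) with hδdef
  have hδ : 0 < δ := by positivity
  obtain ⟨a, ha, hca⟩ := Metric.mem_closure_iff.1 hc δ hδ
  rw [dist_comm, dist_eq_norm] at hca
  have ha1 : ‖a‖ ≤ 1 + δ := by linarith [norm_le_norm_add_norm_sub' a c]
  have hr : ‖((1 + δ : ℝ) : ℂ)⁻¹‖ = (1 + δ)⁻¹ := by
    rw [norm_inv, Complex.norm_of_nonneg (by positivity)]
  refine ⟨((1 + δ : ℝ) : ℂ)⁻¹ • a, A.smul_mem _ ha, ?_, fun i => ?_⟩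
  · rw [norm_smul, hr]
    exact inv_mul_le_one_of_le₀ ha1 (by positivity)
  · have h1 : ‖((1 + δ : ℝ) : ℂ)⁻¹ • a - a‖ ≤ δ := by
      have h2 : ((1 + δ : ℝ) : ℂ)⁻¹ • a - a
          = ((1 + δ : ℝ) : ℂ)⁻¹ • ((-δ : ℝ) : ℂ) • a := by
        have h0 : ((1 + δ : ℝ) : ℂ) ≠ 0 := by
          exact_mod_cast (by positivity : (1 + δ : ℝ) ≠ 0)
        rw [smul_smul]
        nth_rewrite 2 [← one_smul ℂ a]
        rw [← sub_smul]
        congr 1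
        field_simp
        push_cast
        ring
      rw [h2, norm_smul, norm_smul, hr, Complex.norm_real, norm_neg, Real.norm_of_nonneg hδ.le,
        inv_mul_le_iff₀ (by positivity)]
      nlinarith
    have h3 : ‖ξ i‖ ≤ K :=
      Finset.single_le_sum (f := fun i => ‖ξ i‖) (fun i _ => norm_nonneg _) (Finset.mem_univ i)
    have h4 : ‖((1 + δ : ℝ) : ℂ)⁻¹ • a - c‖ ≤ 2 * δ := by
      linarith [norm_sub_le_norm_sub_add_norm_sub (((1 + δ : ℝ) : ℂ)⁻¹ • a) a c]
    have h5 := (((1 + δ : ℝ) : ℂ)⁻¹ • a - c).le_of_opNorm_le h4 (ξ i)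
    have h6 : 4 * δ * (K + 1) = ε := by rw [hδdef]; field_simp
    have h7 := hcx _ (Finset.mem_image_of_mem ξ (Finset.mem_univ i))
    have h8 : (((1 + δ : ℝ) : ℂ)⁻¹ • a - x) (ξ i)
        = (((1 + δ : ℝ) : ℂ)⁻¹ • a - c) (ξ i) + (c - x) (ξ i) := by
      simp
    rw [h8]
    nlinarith [norm_add_le ((((1 + δ : ℝ) : ℂ)⁻¹ • a - c) (ξ i)) ((c - x) (ξ i))]
end

section
/- Let H be a complex Hilbert space and M a star-subalgebra of the bounded operators on H containing the identity operator. Then a bounded operator x belongs to the double commutant M″ if and only if for every ε > 0 and every finite family of vectors ξ_1, …, ξ_n ∈ H there exists a ∈ M with ‖(a − x) ξ_i‖ < ε for all i; that is, M″ equals the closure of M in the strong operator topology. (Von Neumann's double commutant theorem.) -/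
/-!
The strong operator closure of `M` lies in `M''` because commuting with a fixed operator is an
SOT-closed condition. For the converse, the vectors `ξ₁, …, ξₙ` are treated as one vector `ξ` of
the Hilbert sum `Hⁿ`, on which an operator `a` acts diagonally (`diagOp`). The closure `V` of
`{a ξ : a ∈ M}` is invariant under the star-closed family of diagonal operators coming from `M`,
so the orthogonal projection `P` onto `V` commutes with them (`starProjection_diagOp`).
Equivalently, the `n²` matrix entries of `P` lie in `M'`. An element `x` of `M''` commutes with these
entries, so its diagonal action commutes with `P` (`diagOp_commute_of_entries`). As `1 ∈ M` gives
`ξ ∈ V`, it follows that `x ξ = x P ξ = P x ξ ∈ V`, which is the required approximation.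
-/

section Amplification

variable {H : Type*} [NormedAddCommGroup H] [InnerProductSpace ℂ H]

/-- The diagonal action of `a` on the Hilbert sum of `n` copies of `H`. -/
noncomputable def diagOp (n : ℕ) (a : H →L[ℂ] H) :
    PiLp 2 (fun _ : Fin n => H) →L[ℂ] PiLp 2 (fun _ : Fin n => H) :=
  ((PiLp.continuousLinearEquiv 2 ℂ (fun _ : Fin n => H)).symm :
      (Fin n → H) →L[ℂ] PiLp 2 (fun _ : Fin n => H)) ∘L
    (ContinuousLinearMap.pi fun i => a ∘L PiLp.proj 2 (fun _ : Fin n => H) i)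

@[simp] lemma diagOp_apply (n : ℕ) (a : H →L[ℂ] H) (v : PiLp 2 (fun _ : Fin n => H))
    (i : Fin n) : diagOp n a v i = a (v i) := rfl

/-- The inclusion of `H` as the `j`-th summand of the Hilbert sum of `n` copies of `H`. -/
noncomputable def inclOp (n : ℕ) (j : Fin n) : H →L[ℂ] PiLp 2 (fun _ : Fin n => H) :=
  ((PiLp.continuousLinearEquiv 2 ℂ (fun _ : Fin n => H)).symm :
      (Fin n → H) →L[ℂ] PiLp 2 (fun _ : Fin n => H)) ∘L
    (ContinuousLinearMap.single ℂ (fun _ : Fin n => H) j)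

lemma inclOp_apply (n : ℕ) (j i : Fin n) (h : H) :
    inclOp n j h i = Pi.single (M := fun _ : Fin n => H) j h i := rfl

lemma diagOp_inclOp (n : ℕ) (a : H →L[ℂ] H) (j : Fin n) (h : H) :
    diagOp n a (inclOp n j h) = inclOp n j (a h) := by
  ext i
  rw [diagOp_apply, inclOp_apply, inclOp_apply]
  by_cases hij : i = j
  · subst hij; simp
  · simp [hij]

lemma sum_inclOp (n : ℕ) (v : PiLp 2 (fun _ : Fin n => H)) :
    ∑ j, inclOp n j (v j) = v := by
  ext i
  simp [inclOp_apply, Finset.sum_apply, Finset.sum_pi_single]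

/-- An operator on the Hilbert sum commutes with the diagonal action of `x` as soon as `x`
commutes with each of its matrix entries. -/
lemma diagOp_commute_of_entries (n : ℕ) (x : H →L[ℂ] H)
    (P : PiLp 2 (fun _ : Fin n => H) →L[ℂ] PiLp 2 (fun _ : Fin n => H))
    (h : ∀ i j, ∀ w : H, P (inclOp n j (x w)) i = x (P (inclOp n j w) i))
    (v : PiLp 2 (fun _ : Fin n => H)) : P (diagOp n x v) = diagOp n x (P v) := by
  rw [← sum_inclOp n v]
  simp only [map_sum, diagOp_inclOp]
  refine Finset.sum_congr rfl fun j _ => ?_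
  ext i
  rw [diagOp_apply, h]

variable [CompleteSpace H]

lemma inner_diagOp_left (n : ℕ) (a : H →L[ℂ] H) (v w : PiLp 2 (fun _ : Fin n => H)) :
    inner ℂ (diagOp n (star a) v) w = inner ℂ v (diagOp n a w) := by
  simp [PiLp.inner_apply, ContinuousLinearMap.star_eq_adjoint,
    ContinuousLinearMap.adjoint_inner_left]

/-- The orthogonal projection onto a closed subspace invariant under the diagonal actions of `a`
and `star a` commutes with the diagonal action of `a`: invariance under `star a` makes the
orthogonal complement invariant under `a`. -/
lemma starProjection_diagOp (n : ℕ) (a : H →L[ℂ] H)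
    (V : Submodule ℂ (PiLp 2 (fun _ : Fin n => H))) [V.HasOrthogonalProjection]
    (ha : ∀ v ∈ V, diagOp n a v ∈ V) (ha' : ∀ v ∈ V, diagOp n (star a) v ∈ V)
    (v : PiLp 2 (fun _ : Fin n => H)) :
    V.starProjection (diagOp n a v) = diagOp n a (V.starProjection v) := by
  refine Submodule.eq_starProjection_of_mem_orthogonal
    (ha _ (Submodule.starProjection_apply_mem V v)) ?_
  rw [← map_sub, Submodule.mem_orthogonal]
  intro u hu
  rw [← inner_diagOp_left]
  exact (Submodule.mem_orthogonal V _).1 (Submodule.sub_starProjection_mem_orthogonal v) _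
    (ha' u hu)

/-- The closure of the orbit of `ξ` under the diagonal action of `M`. -/
noncomputable def orbitClosure (M : StarSubalgebra ℂ (H →L[ℂ] H)) (n : ℕ)
    (ξ : PiLp 2 (fun _ : Fin n => H)) : Submodule ℂ (PiLp 2 (fun _ : Fin n => H)) :=
  Submodule.topologicalClosure
    { carrier := {v | ∃ a ∈ M, diagOp n a ξ = v}
      zero_mem' := ⟨0, zero_mem M, by ext i; simp⟩
      add_mem' := by
        rintro _ _ ⟨a, ha, rfl⟩ ⟨b, hb, rfl⟩
        exact ⟨a + b, add_mem ha hb, by ext i; simp⟩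
      smul_mem' := by
        rintro c _ ⟨a, ha, rfl⟩
        exact ⟨c • a, M.smul_mem ha c, by ext i; simp⟩ }

lemma mem_orbitClosure (M : StarSubalgebra ℂ (H →L[ℂ] H)) (n : ℕ)
    (ξ v : PiLp 2 (fun _ : Fin n => H)) :
    v ∈ orbitClosure M n ξ ↔ v ∈ closure {v | ∃ a ∈ M, diagOp n a ξ = v} := Iff.rfl

lemma diagOp_mem_orbitClosure (M : StarSubalgebra ℂ (H →L[ℂ] H)) (n : ℕ)
    (ξ : PiLp 2 (fun _ : Fin n => H)) {a : H →L[ℂ] H} (ha : a ∈ M)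
    (v : PiLp 2 (fun _ : Fin n => H)) (hv : v ∈ orbitClosure M n ξ) :
    diagOp n a v ∈ orbitClosure M n ξ := by
  rw [mem_orbitClosure] at hv ⊢
  refine map_mem_closure (diagOp n a).continuous hv ?_
  rintro _ ⟨b, hb, rfl⟩
  exact ⟨a * b, mul_mem ha hb, by ext i; simp⟩

end Amplification

/-- **Von Neumann's double commutant theorem.** For a star-subalgebra `M` of the bounded
operators on a complex Hilbert space `H` containing the identity, a bounded operator `x`
belongs to the double commutant `M''` if and only if `x` lies in the closure of `M` in the
strong operator topology. -/
theorem double_commutant_theorem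
    {H : Type*} [NormedAddCommGroup H] [InnerProductSpace ℂ H] [CompleteSpace H]
    (M : StarSubalgebra ℂ (H →L[ℂ] H)) (x : H →L[ℂ] H) :
    x ∈ Set.centralizer (Set.centralizer (M : Set (H →L[ℂ] H))) ↔
      ∀ ε > (0 : ℝ), ∀ (n : ℕ) (ξ : Fin n → H),
        ∃ a ∈ M, ∀ i, ‖(a - x) (ξ i)‖ < ε := by
  constructor
  · intro hx ε hε n ξ
    let ζ : PiLp 2 (fun _ : Fin n => H) := WithLp.toLp 2 ξ
    let V := orbitClosure M n ζ
    have : CompleteSpace V :=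
      (Submodule.isClosed_topologicalClosure _).completeSpace_coe
    have hP : ∀ a ∈ M, ∀ v, V.starProjection (diagOp n a v) =
        diagOp n a (V.starProjection v) := fun a ha =>
      starProjection_diagOp n a V (diagOp_mem_orbitClosure M n ζ ha)
        (diagOp_mem_orbitClosure M n ζ (star_mem ha))
    have hxP : V.starProjection (diagOp n x ζ) = diagOp n x (V.starProjection ζ) := by
      refine diagOp_commute_of_entries n x _ (fun i j w => ?_) ζ
      -- The `(i, j)` matrix entry of the projection lies in `M'`.
      have hmem : (PiLp.proj 2 (fun _ : Fin n => H) i ∘L V.starProjection ∘L inclOp n j :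
          H →L[ℂ] H) ∈ Set.centralizer (M : Set (H →L[ℂ] H)) := by
        intro a ha
        ext w
        have := congrArg (fun u : PiLp 2 (fun _ : Fin n => H) => u i) (hP a ha (inclOp n j w))
        rw [diagOp_inclOp] at this
        exact this.symm
      exact congrArg (fun T : H →L[ℂ] H => T w) (hx _ hmem)
    have hζ : ζ ∈ V := subset_closure ⟨1, one_mem M, by ext i; simp⟩
    have hxζ : diagOp n x ζ ∈ V := by
      rw [← Submodule.starProjection_eq_self_iff.2 hζ, ← hxP]
      exact Submodule.starProjection_apply_mem V _
    obtain ⟨_, ⟨a, ha, rfl⟩, hdist⟩ :=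
      Metric.mem_closure_iff.1 ((mem_orbitClosure M n ζ _).1 hxζ) ε hε
    refine ⟨a, ha, fun i => lt_of_le_of_lt ?_ hdist⟩
    rw [dist_comm, dist_eq_norm]
    exact PiLp.norm_apply_le (diagOp n a ζ - diagOp n x ζ) i
  · intro h T hT
    ext v
    refine eq_of_forall_dist_le fun ε hε => ?_
    have hpos : 0 < ‖T‖ + 1 := by positivity
    obtain ⟨a, ha, hav⟩ := h (ε / (‖T‖ + 1)) (div_pos hε hpos) 2 ![v, T v]
    have h0 : ‖(a - x) v‖ < ε / (‖T‖ + 1) := hav 0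
    have h1 : ‖(a - x) (T v)‖ < ε / (‖T‖ + 1) := hav 1
    have hcomm : a (T v) = T (a v) := congrArg (fun S : H →L[ℂ] H => S v) (hT a ha)
    have key : (T * x) v - (x * T) v = (a - x) (T v) - T ((a - x) v) := by
      simp [hcomm]
    rw [dist_eq_norm, key]
    calc ‖(a - x) (T v) - T ((a - x) v)‖
        ≤ ‖(a - x) (T v)‖ + ‖T‖ * ‖(a - x) v‖ :=
          (norm_sub_le _ _).trans (by gcongr; exact T.le_opNorm _)
      _ ≤ ε / (‖T‖ + 1) + ‖T‖ * (ε / (‖T‖ + 1)) := by gcongr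
      _ = ε := by field_simp; ring
end

section
/- Let H_c and H_p be complex Hilbert spaces, S a star-subalgebra of the bounded operators on H_c containing the identity, T a star-subalgebra of the bounded operators on H_p containing the identity, u : H_c → H_p a linear isometry, and Φ a map assigning to each a ∈ S a bounded operator on H_p such that: Φ(a) ∈ T, ‖Φ(a)‖ ≤ ‖a‖, u (a ξ) = Φ(a) (u ξ) for all ξ ∈ H_c, and u (a* ξ) = Φ(a)* (u ξ) for all ξ ∈ H_c. Then for every x in the double commutant S″ there exists y in the double commutant T″ such that u (x ξ) = y (u ξ) and u (x* ξ) = y* (u ξ) for all ξ ∈ H_c. -/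
/-! Write `U` for `u` as a bounded operator and `e = U U*` for the projection onto its range. The
hypotheses on `Φ` say that `Φ a` commutes with `e` and restricts to `u a u⁻¹` on the range of `u`,
so the operators `Φ a`, `a ∈ S`, lie in the von Neumann algebra `M = (T' ∪ {e})' = T'' ∩ {e}'`.
The result then follows from the reduction theorem for von Neumann algebras: since `e ∈ M'`, the
reduced algebra `M_e` is the commutant of the set of compressions `e b e`, `b ∈ M'`. These
compressions, transported to `Hc`, are the operators `U* b U`; they commute with `S`, hence with
every `x ∈ S''`, and therefore `u x u⁻¹` extends to some `y ∈ M`.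

The reduction theorem is proved directly: one sets `y (∑ b (u ξ_b)) = ∑ b (u (x ξ_b))` for finite
sums over `b ∈ M'` and extends by continuity, and by zero on the orthogonal complement
(`exists_commuting_extension`). The bound `‖∑ b (u (x ξ_b))‖ ≤ ‖x‖ ‖∑ b (u ξ_b)‖` holds because,
with `c = (‖x‖² - x* x)^{1/2}`, which also commutes with all `U* b U`, one has
`‖∑ b (u (x ξ_b))‖² + ‖∑ b (u (c ξ_b))‖² = ‖x‖² ‖∑ b (u ξ_b)‖²` (`norm_amplify_le`).
-/

open ContinuousLinearMap in
/-- The linear map sending a finitely supported family `(ξ_b)` indexed by a star-subalgebra `B`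
to `∑ b (w ξ_b)`. -/
noncomputable def amplify {Hc Hp : Type*}
    [NormedAddCommGroup Hc] [InnerProductSpace ℂ Hc]
    [NormedAddCommGroup Hp] [InnerProductSpace ℂ Hp] [CompleteSpace Hp]
    (B : StarSubalgebra ℂ (Hp →L[ℂ] Hp)) (w : Hc →L[ℂ] Hp) : (B →₀ Hc) →ₗ[ℂ] Hp :=
  Finsupp.lsum ℂ fun b : B => ((b : Hp →L[ℂ] Hp) ∘L w).toLinearMap

section

variable {Hc Hp : Type*}
  [NormedAddCommGroup Hc] [InnerProductSpace ℂ Hc]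
  [NormedAddCommGroup Hp] [InnerProductSpace ℂ Hp] [CompleteSpace Hp]

@[simp]
lemma amplify_single (B : StarSubalgebra ℂ (Hp →L[ℂ] Hp)) (w : Hc →L[ℂ] Hp) (b : B) (ξ : Hc) :
    amplify B w (Finsupp.single b ξ) = (b : Hp →L[ℂ] Hp) (w ξ) := by
  simp [amplify]

/-- If `∑ b (v ξ_b) ↦ ∑ b (w ξ_b)` is bounded, it is induced by an operator in the commutant
of `B`. -/
lemma exists_commuting_extension (B : StarSubalgebra ℂ (Hp →L[ℂ] Hp)) (v w : Hc →L[ℂ] Hp)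
    (C : ℝ) (h : ∀ f, ‖amplify B w f‖ ≤ C * ‖amplify B v f‖) :
    ∃ y : Hp →L[ℂ] Hp, (∀ b ∈ B, b * y = y * b) ∧ ∀ ξ, y (v ξ) = w ξ := by
  set R : Submodule ℂ Hp := LinearMap.range (amplify B v) with hR
  set D : Submodule ℂ Hp := R.topologicalClosure with hD
  have hRD : R ≤ D := R.le_topologicalClosure
  have hDclosed : IsClosed (D : Set Hp) := R.isClosed_topologicalClosure
  have : CompleteSpace D := hDclosed.completeSpace_coe
  let p : (B →₀ Hc) →ₗ[ℂ] D :=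
    (amplify B v).codRestrict D fun f => hRD (LinearMap.mem_range_self _ f)
  have hp : DenseRange p := by
    intro z
    rw [closure_subtype]
    have hz : (z : Hp) ∈ closure (R : Set Hp) := z.2
    refine closure_mono ?_ hz
    rintro _ ⟨f, rfl⟩
    exact ⟨p f, ⟨f, rfl⟩, rfl⟩
  let V : D →L[ℂ] Hp := (amplify B w).extendOfNorm p
  have hV : ∀ f, V (p f) = amplify B w f := LinearMap.extendOfNorm_eq hp ⟨C, h⟩
  let y : Hp →L[ℂ] Hp := V ∘L D.orthogonalProjectionOnto
  have hy : ∀ f, y (amplify B v f) = amplify B w f := by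
    intro f
    rw [← hV f]
    change V (D.orthogonalProjectionOnto ((p f : D) : Hp)) = _
    rw [Submodule.orthogonalProjectionOnto_mem_subspace_eq_self]
  have hy0 : ∀ z ∈ Dᗮ, y z = 0 := by
    intro z hz
    change V (D.orthogonalProjectionOnto z) = 0
    rw [Submodule.orthogonalProjectionOnto_apply_of_mem_orthogonal hz, map_zero]
  -- `B` acts on families by left translation of the index
  have htrans : ∀ (b : B) (f : B →₀ Hc), ∃ g : B →₀ Hc, ∀ w' : Hc →L[ℂ] Hp,
      amplify B w' g = (b : Hp →L[ℂ] Hp) (amplify B w' f) := by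
    intro b f
    induction f using Finsupp.induction_linear with
    | zero => exact ⟨0, fun w' => by simp⟩
    | add f₁ f₂ h₁ h₂ =>
      obtain ⟨g₁, h₁⟩ := h₁
      obtain ⟨g₂, h₂⟩ := h₂
      exact ⟨g₁ + g₂, fun w' => by simp [h₁, h₂]⟩
    | single c ξ => exact ⟨Finsupp.single (b * c) ξ, fun w' => by simp⟩
  have hcommD : ∀ b ∈ B, ∀ z ∈ D, b (y z) = y (b z) := by
    intro b hb z hz
    have hcl : IsClosed {z : Hp | b (y z) = y (b z)} :=
      isClosed_eq (by fun_prop) (by fun_prop)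
    refine closure_minimal (s := (R : Set Hp)) ?_ hcl hz
    rintro _ ⟨f, rfl⟩
    obtain ⟨g, hg⟩ := htrans ⟨b, hb⟩ f
    change b (y (amplify B v f)) = y (b (amplify B v f))
    rw [hy, ← hg v, hy, hg w]
  have horth : ∀ b ∈ B, ∀ z ∈ Dᗮ, b z ∈ Dᗮ := by
    intro b hb z hz
    rw [hD, Submodule.orthogonal_closure] at hz ⊢
    rw [Submodule.mem_orthogonal] at hz ⊢
    rintro _ ⟨f, rfl⟩
    obtain ⟨g, hg⟩ := htrans ⟨star b, star_mem hb⟩ f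
    rw [← ContinuousLinearMap.adjoint_inner_left, ← ContinuousLinearMap.star_eq_adjoint]
    have := hz (amplify B v g) ⟨g, rfl⟩
    rwa [hg v] at this
  refine ⟨y, fun b hb => ?_, fun ξ => ?_⟩
  · ext z
    obtain ⟨z₁, h₁, z₂, h₂, rfl⟩ := D.exists_add_mem_mem_orthogonal z
    simp only [mul_apply_eq_comp, map_add]
    rw [hcommD b hb z₁ h₁, hy0 z₂ h₂, hy0 _ (horth b hb z₂ h₂), map_zero]
  · have := hy (Finsupp.single 1 ξ)
    simpa using this

variable [CompleteSpace Hc]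

open ContinuousLinearMap

/-- When `z` commutes with all compressions `U* b U`, it can be moved across the positive form
`(ξ_b), (η_b) ↦ ⟪∑ b (U ξ_b), ∑ b (U η_b)⟫`. -/
lemma inner_amplify (B : StarSubalgebra ℂ (Hp →L[ℂ] Hp)) (U : Hc →L[ℂ] Hp) (z : Hc →L[ℂ] Hc)
    (hz : ∀ b ∈ B, (adjoint U ∘L b ∘L U) * z = z * (adjoint U ∘L b ∘L U)) (f g : B →₀ Hc) :
    inner ℂ (amplify B (U ∘L z) f) (amplify B (U ∘L z) g) =
      inner ℂ (amplify B U f) (amplify B (U ∘L (star z * z)) g) := by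
  induction f using Finsupp.induction_linear with
  | zero => simp
  | add f₁ f₂ h₁ h₂ => simp only [map_add, inner_add_left, h₁, h₂]
  | single b ξ =>
    induction g using Finsupp.induction_linear with
    | zero => simp
    | add g₁ g₂ h₁ h₂ => simp only [map_add, inner_add_right, h₁, h₂]
    | single c η =>
      have hbc := DFunLike.congr_fun (hz (star (c : Hp →L[ℂ] Hp) * b)
        (mul_mem (star_mem c.2) b.2)) ξ
      simp only [mul_apply_eq_comp, coe_comp, Function.comp_apply, star_eq_adjoint] at hbc
      simp only [amplify_single, coe_comp, Function.comp_apply, mul_apply_eq_comp,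
        star_eq_adjoint]
      rw [← adjoint_inner_left (c : Hp →L[ℂ] Hp), ← adjoint_inner_left U,
        ← adjoint_inner_left (c : Hp →L[ℂ] Hp), ← adjoint_inner_left U, adjoint_inner_right, hbc]

/-- The bound making `∑ b (U ξ_b) ↦ ∑ b (U (x ξ_b))` well defined and continuous. The defect
`‖x‖² ‖∑ b (U ξ_b)‖² - ‖∑ b (U (x ξ_b))‖²` is a square, obtained from the operator
`(‖x‖² - x* x)^{1/2}` in place of `x`. -/
lemma norm_amplify_le (B : StarSubalgebra ℂ (Hp →L[ℂ] Hp)) (U : Hc →L[ℂ] Hp) (x : Hc →L[ℂ] Hc)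
    (hx : ∀ b ∈ B, (adjoint U ∘L b ∘L U) * x = x * (adjoint U ∘L b ∘L U)) (f : B →₀ Hc) :
    ‖amplify B (U ∘L x) f‖ ≤ ‖x‖ * ‖amplify B U f‖ := by
  set c := CFC.sqrt (algebraMap ℝ (Hc →L[ℂ] Hc) (‖x‖ ^ 2) - star x * x) with hc
  have hnn : 0 ≤ algebraMap ℝ (Hc →L[ℂ] Hc) (‖x‖ ^ 2) - star x * x :=
    sub_nonneg.2 CStarAlgebra.star_mul_le_algebraMap_norm_sq
  have hcc : c * c = algebraMap ℝ (Hc →L[ℂ] Hc) (‖x‖ ^ 2) - star x * x :=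
    CFC.sqrt_mul_sqrt_self _ hnn
  have hcs : star c = c := (CFC.sqrt_nonneg _).isSelfAdjoint
  -- the compressions form a self-adjoint set, so they commute with `x*` as well
  have hx' : ∀ b ∈ B, (adjoint U ∘L b ∘L U) * star x = star x * (adjoint U ∘L b ∘L U) := by
    intro b hb
    have := congr_arg star (hx (star b) (star_mem hb))
    simpa [star_eq_adjoint, mul_def, adjoint_comp, comp_assoc] using this.symm
  have hcb : ∀ b ∈ B, (adjoint U ∘L b ∘L U) * c = c * (adjoint U ∘L b ∘L U) := by
    intro b hb
    have h1 : Commute (adjoint U ∘L b ∘L U) x := hx b hb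
    have h2 : Commute (adjoint U ∘L b ∘L U) (star x) := hx' b hb
    have h3 : Commute (algebraMap ℝ (Hc →L[ℂ] Hc) (‖x‖ ^ 2) - star x * x)
        (adjoint U ∘L b ∘L U) :=
      ((Algebra.commute_algebraMap_right _ _).sub_right (h2.mul_right h1)).symm
    exact (h3.cfcₙ_nnreal _).symm.eq
  have hsum : amplify B (U ∘L (star x * x)) f + amplify B (U ∘L (star c * c)) f
      = ((‖x‖ ^ 2 : ℝ) : ℂ) • amplify B U f := by
    rw [hcs, hcc]
    induction f using Finsupp.induction_linear with
    | zero => simp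
    | add f₁ f₂ h₁ h₂ =>
      simp only [map_add, smul_add]
      rw [← h₁, ← h₂]
      abel
    | single b ξ =>
      simp only [amplify_single, coe_comp, Function.comp_apply]
      rw [← map_add, ← map_add, ← add_apply, add_sub_cancel, ← map_smul, ← map_smul]
      simp only [Algebra.algebraMap_eq_smul_one, smul_apply, one_apply_eq_self, Complex.coe_smul]
  have e1 := inner_amplify B U x hx f f
  have e2 := inner_amplify B U c hcb f f
  have key : ‖amplify B (U ∘L x) f‖ ^ 2 + ‖amplify B (U ∘L c) f‖ ^ 2
      = ‖x‖ ^ 2 * ‖amplify B U f‖ ^ 2 := by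
    have := congr_arg (inner ℂ (amplify B U f)) hsum
    rw [inner_add_right, ← e1, ← e2, inner_smul_right, inner_self_eq_norm_sq_to_K,
      inner_self_eq_norm_sq_to_K, inner_self_eq_norm_sq_to_K] at this
    apply Complex.ofReal_injective
    push_cast
    simpa using this
  refine le_of_sq_le_sq ?_ (by positivity)
  nlinarith [sq_nonneg ‖amplify B (U ∘L c) f‖]

end

theorem pushforward_double_commutant
    {Hc Hp : Type*}
    [NormedAddCommGroup Hc] [InnerProductSpace ℂ Hc] [CompleteSpace Hc]
    [NormedAddCommGroup Hp] [InnerProductSpace ℂ Hp] [CompleteSpace Hp]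
    (S : StarSubalgebra ℂ (Hc →L[ℂ] Hc)) (T : StarSubalgebra ℂ (Hp →L[ℂ] Hp))
    (u : Hc →ₗᵢ[ℂ] Hp) (Φ : (Hc →L[ℂ] Hc) → (Hp →L[ℂ] Hp))
    (hΦ_mem : ∀ a ∈ S, Φ a ∈ T)
    (hΦ_norm : ∀ a ∈ S, ‖Φ a‖ ≤ ‖a‖)
    (hΦ_push : ∀ a ∈ S, ∀ ξ : Hc, u (a ξ) = Φ a (u ξ))
    (hΦ_push_star : ∀ a ∈ S, ∀ ξ : Hc, u (star a ξ) = star (Φ a) (u ξ)) :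
    ∀ x ∈ Set.centralizer (Set.centralizer (S : Set (Hc →L[ℂ] Hc))),
      ∃ y ∈ Set.centralizer (Set.centralizer (T : Set (Hp →L[ℂ] Hp))),
        (∀ ξ : Hc, u (x ξ) = y (u ξ)) ∧ (∀ ξ : Hc, u (star x ξ) = star y (u ξ)) := by
  intro x hx
  let U : Hc →L[ℂ] Hp := u.toContinuousLinearMap
  let Ud : Hp →L[ℂ] Hc := ContinuousLinearMap.adjoint U
  have hUU : Ud ∘L U = 1 := by
    ext ξ
    refine ext_inner_left ℂ fun η => ?_
    change inner ℂ η (ContinuousLinearMap.adjoint U (U ξ)) = inner ℂ η ξ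
    rw [ContinuousLinearMap.adjoint_inner_right]
    exact u.inner_map_map η ξ
  have hUU' : ∀ ξ, Ud (U ξ) = ξ := fun ξ => DFunLike.congr_fun hUU ξ
  -- the projection onto the range of `u`
  let e : Hp →L[ℂ] Hp := U ∘L Ud
  have he : star e = e := by
    simp [e, Ud, ContinuousLinearMap.star_eq_adjoint, ContinuousLinearMap.adjoint_comp]
  have hpush : ∀ a ∈ S, U ∘L a = Φ a ∘L U := fun a ha => by
    ext ξ; exact hΦ_push a ha ξ
  have hpush' : ∀ a ∈ S, U ∘L star a = star (Φ a) ∘L U := fun a ha => by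
    ext ξ; exact hΦ_push_star a ha ξ
  -- the adjoint of the relation `U a* = (Φ a)* U`
  have hpull : ∀ a ∈ S, a ∘L Ud = Ud ∘L Φ a := fun a ha => by
    have := congr_arg ContinuousLinearMap.adjoint (hpush' a ha)
    simpa [ContinuousLinearMap.star_eq_adjoint, ContinuousLinearMap.adjoint_comp] using this
  let T' : Set (Hp →L[ℂ] Hp) := Set.centralizer (T : Set (Hp →L[ℂ] Hp))
  have hT'star : ∀ t ∈ T', star t ∈ T' := fun t ht =>
    Set.star_mem_centralizer' (fun a ha => star_mem (S := StarSubalgebra ℂ _) (s := T) ha) ht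
  let M : StarSubalgebra ℂ (Hp →L[ℂ] Hp) := StarSubalgebra.centralizer ℂ (T' ∪ {e})
  let B : StarSubalgebra ℂ (Hp →L[ℂ] Hp) := StarSubalgebra.centralizer ℂ (M : Set (Hp →L[ℂ] Hp))
  have hgen : ∀ g ∈ T' ∪ {e}, g ∈ B := by
    intro g hg
    refine (StarSubalgebra.mem_centralizer_iff ℂ).2 fun m hm => ⟨?_, ?_⟩
    · exact (((StarSubalgebra.mem_centralizer_iff ℂ).1 hm g hg).1).symm
    · exact (((StarSubalgebra.mem_centralizer_iff ℂ).1 (star_mem hm) g hg).1).symm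
  have hΦM : ∀ a ∈ S, Φ a ∈ M := by
    intro a ha
    have hΦe : e * Φ a = Φ a * e := by
      change (U ∘L Ud) ∘L Φ a = Φ a ∘L (U ∘L Ud)
      rw [ContinuousLinearMap.comp_assoc, ← hpull a ha, ← ContinuousLinearMap.comp_assoc,
        hpush a ha, ContinuousLinearMap.comp_assoc]
    refine (StarSubalgebra.mem_centralizer_iff ℂ).2 ?_
    rintro g (hg | rfl)
    · exact ⟨(hg _ (hΦ_mem a ha)).symm, (hT'star g hg _ (hΦ_mem a ha)).symm⟩
    · exact ⟨hΦe, by rw [he]; exact hΦe⟩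
  have hcomp : ∀ b ∈ B, (Ud ∘L b ∘L U) * x = x * (Ud ∘L b ∘L U) := by
    intro b hb
    refine hx _ fun a ha => ?_
    have hab : Φ a ∘L b = b ∘L Φ a :=
      ((StarSubalgebra.mem_centralizer_iff ℂ).1 hb (Φ a) (hΦM a ha)).1
    change a ∘L (Ud ∘L b ∘L U) = (Ud ∘L b ∘L U) ∘L a
    calc a ∘L (Ud ∘L b ∘L U) = (a ∘L Ud) ∘L b ∘L U := rfl
      _ = Ud ∘L (Φ a ∘L b) ∘L U := by rw [hpull a ha]; rfl
      _ = Ud ∘L b ∘L (Φ a ∘L U) := by rw [hab]; rfl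
      _ = (Ud ∘L b ∘L U) ∘L a := by rw [← hpush a ha]; rfl
  obtain ⟨y, hyB, hyU⟩ := exists_commuting_extension B U (U ∘L x) ‖x‖
    (norm_amplify_le B U x hcomp)
  have hye : e * y = y * e := hyB e (hgen e (Or.inr rfl))
  refine ⟨y, fun t ht => hyB t (hgen t (Or.inl ht)), fun ξ => (hyU ξ).symm, fun ξ => ?_⟩
  -- `U* y = U* e y = U* y e = x U*`, and then take adjoints
  have hyd : Ud ∘L y = x ∘L Ud := by
    ext η
    have h1 : U (Ud (y η)) = y (U (Ud η)) := DFunLike.congr_fun hye η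
    have h2 : y (U (Ud η)) = U (x (Ud η)) := hyU (Ud η)
    change Ud (y η) = x (Ud η)
    rw [← hUU' (Ud (y η)), h1, h2, hUU']
  have hya : star y ∘L U = U ∘L star x := by
    have := congr_arg ContinuousLinearMap.adjoint hyd
    simpa [Ud, ContinuousLinearMap.star_eq_adjoint, ContinuousLinearMap.adjoint_comp] using this
  exact (DFunLike.congr_fun hya ξ).symm
end

section
/- Let A be a unital complex C*-algebra, β > 0, σ a one-parameter group of isometric star-algebra automorphisms of A, and ω a KMS state on A at inverse temperature β with respect to σ. Then ω is invariant under the flow: ω(σ(t)(a)) = ω(a) for every t ∈ ℝ and every a ∈ A. -/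
/-!
For `a ∈ A`, the KMS condition applied to the pair `1, a` yields a bounded function `F` on the closed
strip `0 ≤ Im z ≤ β`, holomorphic inside, with `F t = ω (σ t a) = F (t + iβ)` for real `t`. Because
its two boundary values agree, `F` extends to an `iβ`-periodic function on `ℂ`, which is continuous,
bounded, and holomorphic off the lines `Im z = nβ`. Morera's theorem shows that such lines are
removable (`differentiableOn_of_off_horizontal_line`), so the extension is entire, and Liouville's
theorem makes it constant (`strip_periodic_constant`). Hence `t ↦ ω (σ t a)` is constant.
-/

open scoped ComplexOrder
open Complex

/-- A horizontal line is removable for continuous functions: a function that is continuous on an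
open set and holomorphic there off the line `Im z = b` is holomorphic. A rectangle crossing the line
is cut along it, and Cauchy-Goursat applies to both halves; Morera's theorem concludes. -/
lemma differentiableOn_of_off_horizontal_line {U : Set ℂ} (hU : IsOpen U) {f : ℂ → ℂ} (b : ℝ)
    (hc : ContinuousOn f U) (hd : ∀ z ∈ U, z.im ≠ b → DifferentiableAt ℂ f z) :
    DifferentiableOn ℂ f U := by
  refine (isConservativeOn_and_continuousOn_iff_isDifferentiableOn hU).1 ⟨?_, hc⟩
  intro z w hzw
  rw [← add_eq_zero_iff_eq_neg, wedgeIntegral_add_wedgeIntegral_eq]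
  change Set.uIcc z.re w.re ×ℂ Set.uIcc z.im w.im ⊆ U at hzw
  -- Cauchy-Goursat for a subrectangle whose interior misses the line
  have key : ∀ p q : ℝ, Set.uIcc p q ⊆ Set.uIcc z.im w.im →
      b ∉ Set.Ioo (min p q) (max p q) →
      (∫ x : ℝ in z.re..w.re, f (x + p * I)) - (∫ x : ℝ in z.re..w.re, f (x + q * I)) +
        I • (∫ y : ℝ in p..q, f (w.re + y * I)) -
        I • (∫ y : ℝ in p..q, f (z.re + y * I)) = 0 := by
    intro p q hpq hb
    have hsub : Set.uIcc z.re w.re ×ℂ Set.uIcc p q ⊆ U :=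
      fun v hv => hzw ⟨hv.1, hpq hv.2⟩
    have h := integral_boundary_rect_eq_zero_of_continuousOn_of_differentiableOn f
      (⟨z.re, p⟩ : ℂ) (⟨w.re, q⟩ : ℂ) (hc.mono hsub) (fun v hv =>
        (hd v (hsub ⟨Set.Ioo_subset_Icc_self hv.1, Set.Ioo_subset_Icc_self hv.2⟩)
          (fun h => hb (h ▸ hv.2))).differentiableWithinAt)
    exact h
  by_cases hb : b ∈ Set.Ioo (min z.im w.im) (max z.im w.im)
  · have hbI : b ∈ Set.uIcc z.im w.im := Set.Ioo_subset_Icc_self hb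
    have h1 := key z.im b (Set.uIcc_subset_uIcc_left hbI) (by
      rcases le_total z.im b with h | h <;> simp [h])
    have h2 := key b w.im (Set.uIcc_subset_uIcc_right hbI) (by
      rcases le_total w.im b with h | h <;> simp [h])
    have hint : ∀ x ∈ Set.uIcc z.re w.re, ∀ p q : ℝ, Set.uIcc p q ⊆ Set.uIcc z.im w.im →
        IntervalIntegrable (fun y : ℝ => f (x + y * I)) MeasureTheory.volume p q := by
      intro x hx p q hpq
      refine ContinuousOn.intervalIntegrable (hc.comp (by fun_prop) ?_)
      intro y hy
      exact hzw ⟨by simpa using hx, by simpa using hpq hy⟩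
    have add : ∀ x ∈ Set.uIcc z.re w.re, (∫ y : ℝ in z.im..w.im, f (x + y * I)) =
        (∫ y : ℝ in z.im..b, f (x + y * I)) + ∫ y : ℝ in b..w.im, f (x + y * I) :=
      fun x hx => (intervalIntegral.integral_add_adjacent_intervals
        (hint x hx _ _ (Set.uIcc_subset_uIcc_left hbI))
        (hint x hx _ _ (Set.uIcc_subset_uIcc_right hbI))).symm
    rw [add _ Set.right_mem_uIcc, add _ Set.left_mem_uIcc]
    simp only [smul_eq_mul] at h1 h2 ⊢
    linear_combination h1 + h2
  · exact key _ _ subset_rfl hb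

/-- A bounded continuous function on the closed strip `0 ≤ Im z ≤ β`, holomorphic inside, whose values
on the two boundary lines agree, is constant on the real line. -/
lemma strip_periodic_constant {β : ℝ} (hβ : 0 < β) {F : ℂ → ℂ}
    (hd : DifferentiableOn ℂ F {z : ℂ | 0 < z.im ∧ z.im < β})
    (hc : ContinuousOn F {z : ℂ | 0 ≤ z.im ∧ z.im ≤ β})
    {C : ℝ} (hC : ∀ z : ℂ, 0 ≤ z.im → z.im ≤ β → ‖F z‖ ≤ C)
    (hper : ∀ t : ℝ, F (t + I * β) = F t) (t s : ℝ) : F t = F s := by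
  -- the periodic extension of `F`
  let G : ℂ → ℂ := fun z => F (z - (⌊z.im / β⌋ : ℝ) * β * I)
  let S : ℤ → Set ℂ := fun n => {z | n * β ≤ z.im ∧ z.im ≤ (n + 1) * β}
  have im_shift : ∀ (n : ℤ) (z : ℂ), (z - (n : ℝ) * β * I).im = z.im - n * β := by
    intro n z; simp
  have hfloor : ∀ z : ℂ, (⌊z.im / β⌋ : ℝ) * β ≤ z.im ∧ z.im < (⌊z.im / β⌋ + 1) * β :=
    fun z => ⟨(le_div_iff₀ hβ).1 (Int.floor_le _), (div_lt_iff₀ hβ).1 (Int.lt_floor_add_one _)⟩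
  have hG : ∀ (n : ℤ), Set.EqOn G (fun z => F (z - (n : ℝ) * β * I)) (S n) := by
    rintro n z ⟨h1, h2⟩
    rcases h2.lt_or_eq with h2 | h2
    · have : ⌊z.im / β⌋ = n := Int.floor_eq_iff.2 ⟨(le_div_iff₀ hβ).2 h1, (div_lt_iff₀ hβ).2 h2⟩
      simp only [G, this]
    -- on the upper edge the floor is `n + 1`, and the two boundary values of `F` are compared
    · have : ⌊z.im / β⌋ = n + 1 := by
        rw [h2, mul_div_cancel_right₀ _ hβ.ne']
        exact_mod_cast Int.floor_intCast (R := ℝ) (n + 1)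
      simp only [G, this]
      have e1 : z - ((n + 1 : ℤ) : ℝ) * β * I = (z.re : ℂ) := by
        apply Complex.ext <;> simp [h2]
      have e2 : z - (n : ℝ) * β * I = z.re + I * β := by
        apply Complex.ext <;> simp [h2]; ring
      rw [e1, e2, hper]
  have hGS : ∀ n, ContinuousOn G (S n) := by
    intro n
    refine ContinuousOn.congr (hc.comp (by fun_prop) ?_) (hG n)
    rintro z ⟨h1, h2⟩
    simp only [Set.mem_ofPred_eq, im_shift]
    constructor <;> linarith
  have hSc : ∀ n, IsClosed (S n) := fun n =>
    (isClosed_le continuous_const Complex.continuous_im).inter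
      (isClosed_le Complex.continuous_im continuous_const)
  have hGo : ∀ (n : ℤ) (z : ℂ), n * β < z.im → z.im < (n + 1) * β → DifferentiableAt ℂ G z := by
    intro n z h1 h2
    have hopen : IsOpen {z : ℂ | n * β < z.im ∧ z.im < (n + 1) * β} :=
      (isOpen_lt continuous_const Complex.continuous_im).inter
        (isOpen_lt Complex.continuous_im continuous_const)
    have ho : IsOpen {z : ℂ | 0 < z.im ∧ z.im < β} :=
      (isOpen_lt continuous_const Complex.continuous_im).inter
        (isOpen_lt Complex.continuous_im continuous_const)
    have hev : G =ᶠ[nhds z] (fun z => F (z - (n : ℝ) * β * I)) :=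
      Filter.eventually_of_mem (hopen.mem_nhds ⟨h1, h2⟩)
        fun v hv => hG n ⟨hv.1.le, hv.2.le⟩
    refine DifferentiableAt.congr_of_eventuallyEq ?_ hev
    have hF : DifferentiableAt ℂ F (z - (n : ℝ) * β * I) := by
      refine hd.differentiableAt (ho.mem_nhds ?_)
      simp only [Set.mem_ofPred_eq, im_shift]
      constructor <;> linarith
    exact DifferentiableAt.comp z hF (by fun_prop)
  have hGd : Differentiable ℂ G := by
    intro z
    obtain ⟨h1, h2⟩ := hfloor z
    set n := ⌊z.im / β⌋
    -- the open double strip around the line `Im = nβ`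
    let U : Set ℂ := {v | (n - 1) * β < v.im ∧ v.im < (n + 1) * β}
    have hU : IsOpen U :=
      (isOpen_lt continuous_const Complex.continuous_im).inter
        (isOpen_lt Complex.continuous_im continuous_const)
    have hUc : ContinuousOn G U := by
      refine ((hGS (n - 1)).union_of_isClosed (hGS n) (hSc _) (hSc _)).mono ?_
      rintro v ⟨hv1, hv2⟩
      rcases le_total v.im (n * β) with h | h
      · left; constructor <;> push_cast <;> linarith
      · right; exact ⟨h, hv2.le⟩
    refine (differentiableOn_of_off_horizontal_line hU (n * β) hUc ?_).differentiableAt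
      (hU.mem_nhds ⟨by linarith, h2⟩)
    rintro v ⟨hv1, hv2⟩ hne
    rcases hne.lt_or_gt with h | h
    · exact hGo (n - 1) v (by push_cast; linarith) (by push_cast; linarith)
    · exact hGo n v h hv2
  have hbd : Bornology.IsBounded (Set.range G) := by
    refine isBounded_iff_forall_norm_le.2 ⟨C, ?_⟩
    rintro _ ⟨z, rfl⟩
    obtain ⟨h1, h2⟩ := hfloor z
    apply hC <;> rw [im_shift] <;> linarith
  have hre : ∀ x : ℝ, G x = F x := fun x => by simp [G]
  rw [← hre, ← hre]
  exact hGd.apply_eq_apply_of_bounded hbd _ _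

/-- A KMS state on a unital complex C*-algebra at inverse temperature `β > 0`, with respect to
a one-parameter group of isometric star-algebra automorphisms, is invariant under the flow. -/
theorem kms_state_invariant
    {A : Type*} [NormedRing A] [StarRing A] [CStarRing A] [NormedAlgebra ℂ A]
    [StarModule ℂ A] [CompleteSpace A] [NormOneClass A]
    (β : ℝ) (hβ : 0 < β)
    (σ : ℝ → (A ≃⋆ₐ[ℂ] A))
    (hgroup : ∀ s t : ℝ, ∀ a : A, σ (s + t) a = σ s (σ t a))
    (hiso : ∀ (t : ℝ) (a : A), ‖σ t a‖ = ‖a‖)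
    (ω : A →ₗ[ℂ] ℂ) (hω_one : ω 1 = 1) (hω_pos : ∀ a : A, 0 ≤ ω (star a * a))
    (hKMS : ∀ a b : A, ∃ F : ℂ → ℂ,
      DifferentiableOn ℂ F {z : ℂ | 0 < z.im ∧ z.im < β} ∧
      ContinuousOn F {z : ℂ | 0 ≤ z.im ∧ z.im ≤ β} ∧
      (∃ C : ℝ, ∀ z : ℂ, 0 ≤ z.im → z.im ≤ β → ‖F z‖ ≤ C) ∧
      (∀ t : ℝ, F t = ω (a * σ t b)) ∧
      (∀ t : ℝ, F (t + I * β) = ω (σ t b * a))) :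
    ∀ (t : ℝ) (a : A), ω (σ t a) = ω a := by
  intro t a
  obtain ⟨F, hd, hc, ⟨C, hC⟩, h0, h1⟩ := hKMS 1 a
  have hσ0 : σ 0 a = a := EquivLike.injective (σ 0) (by rw [← hgroup, add_zero])
  have h := strip_periodic_constant hβ hd hc hC (fun s => by rw [h1, h0, mul_one, one_mul]) t 0
  rwa [h0, h0, one_mul, one_mul, hσ0] at h
end

section
/- Let A be a unital complex C*-algebra, H a complex Hilbert space, π : A → B(H) a unital star-algebra homomorphism, and Ω ∈ H a cyclic vector for the range of π (the set {π(a) Ω : a ∈ A} spans a dense subspace of H). Let β > 0 and σ be a one-parameter group of isometric star-algebra automorphisms of A, and suppose the vector state ω(a) := ⟪Ω, π(a) Ω⟫ is a KMS state on A at inverse temperature β with respect to σ. Then Ω is separating for the represented algebra: for every a ∈ A, if π(a) Ω = 0 then π(a) = 0. -/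
/-!
If `π a Ω = 0` and `b : A`, then `‖π a (π b Ω)‖² = ω(b⋆ a⋆ a b)`. The KMS condition for the pair
`(b⋆ a⋆ a, b)` gives a bounded function `F` on the strip `0 ≤ Im z ≤ β` with `F 0 = ω(b⋆ a⋆ a b)`
and `F (t + iβ) = ω(σ_t(b) b⋆ a⋆ a) = ⟪Ω, π(σ_t(b) b⋆ a⋆) π(a) Ω⟫ = 0` for every real `t`.
By the three lines theorem a bounded function holomorphic in the strip that vanishes on one
boundary line vanishes identically (`strip_eq_zero`), so `π a (π b Ω) = 0`. The vectors `π b Ω`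
span a dense subspace, hence `π a = 0`.
-/

open scoped InnerProductSpace
open Complex

/-- A bounded function on a closed horizontal strip, holomorphic inside, that vanishes on the upper
boundary line also vanishes at the origin of the lower one. -/
theorem strip_eq_zero {β : ℝ} (hβ : 0 < β) {F : ℂ → ℂ}
    (hd : DifferentiableOn ℂ F {z : ℂ | 0 < z.im ∧ z.im < β})
    (hc : ContinuousOn F {z : ℂ | 0 ≤ z.im ∧ z.im ≤ β})
    (hb : ∃ C : ℝ, ∀ z : ℂ, 0 ≤ z.im → z.im ≤ β → ‖F z‖ ≤ C)
    (h0 : ∀ t : ℝ, F (t + I * β) = 0) : F 0 = 0 := by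
  obtain ⟨C, hC⟩ := hb
  -- `w ↦ iβw` maps the vertical unit strip onto the horizontal strip of width `β`.
  set f : ℂ → ℂ := fun w => F (I * β * w) with hf
  have him : ∀ w : ℂ, (I * β * w).im = β * w.re := fun w => by simp
  have hmaps : Set.MapsTo (fun w : ℂ => I * β * w)
      (HadamardThreeLines.verticalClosedStrip 0 1) {z : ℂ | 0 ≤ z.im ∧ z.im ≤ β} := by
    rintro w ⟨h1, h2⟩
    simp only [Set.mem_ofPred_eq, him]
    exact ⟨by positivity, by nlinarith⟩
  have hfc : ContinuousOn f (HadamardThreeLines.verticalClosedStrip 0 1) :=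
    hc.comp (by fun_prop) hmaps
  have hfd : DiffContOnCl ℂ f (HadamardThreeLines.verticalStrip 0 1) := by
    refine ⟨hd.comp (by fun_prop) ?_, ?_⟩
    · rintro w ⟨h1, h2⟩
      simp only [Set.mem_ofPred_eq, him]
      exact ⟨by positivity, by nlinarith⟩
    · rwa [HadamardThreeLines.verticalStrip, closure_preimage_re, closure_Ioo zero_ne_one]
  have hfC : ∀ w ∈ HadamardThreeLines.verticalClosedStrip 0 1, ‖f w‖ ≤ C := fun w hw =>
    hC _ (hmaps hw).1 (hmaps hw).2
  have hz : ∀ x ∈ Set.Ioo (0 : ℝ) 1, f x = 0 := by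
    intro x hx
    have hle := HadamardThreeLines.norm_le_interp_of_mem_verticalClosedStrip₀₁' f (z := x)
      (a := C) (b := 0) ⟨by simpa using hx.1.le, by simpa using hx.2.le⟩ hfd
      ⟨C, by rintro _ ⟨w, hw, rfl⟩; exact hfC w hw⟩
      (fun w hw => hfC w (by
        have : w.re = 0 := hw
        simp [HadamardThreeLines.verticalClosedStrip, this]))
      (fun w hw => by
        have hre : w.re = 1 := hw
        have hw' : I * β * w = ((-(β * w.im) : ℝ) : ℂ) + I * β := by
          apply Complex.ext <;> simp [hre]
        simp only [hf, hw', h0, norm_zero, le_refl])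
    rw [ofReal_re, Real.zero_rpow hx.1.ne', mul_zero] at hle
    exact norm_le_zero_iff.mp hle
  have hg : ContinuousOn (fun x : ℝ => f x) (Set.Icc 0 1) :=
    hfc.comp (by fun_prop) (fun x hx => by
      simpa [HadamardThreeLines.verticalClosedStrip] using hx)
  have hcl : Set.EqOn (fun x : ℝ => f x) (fun _ => 0) (Set.Icc 0 1) :=
    Set.EqOn.of_subset_closure hz hg continuousOn_const Set.Ioo_subset_Icc_self
      (closure_Ioo zero_ne_one).ge
  simpa [hf] using hcl (Set.left_mem_Icc.mpr zero_le_one)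

/-- The GNS vector representative of a KMS state is separating for the represented algebra:
if the vector state of a cyclic vector `Ω` in a representation `π` of a unital complex
C*-algebra is a KMS state at inverse temperature `β > 0` for a one-parameter group of
isometric star-algebra automorphisms, then `π a Ω = 0` implies `π a = 0`. -/
theorem kms_vector_separating
    {A : Type*} [NormedRing A] [StarRing A] [CStarRing A] [NormedAlgebra ℂ A]
    [StarModule ℂ A] [CompleteSpace A] [NormOneClass A]
    {H : Type*} [NormedAddCommGroup H] [InnerProductSpace ℂ H] [CompleteSpace H]
    (π : A →⋆ₐ[ℂ] (H →L[ℂ] H)) (Ω : H)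
    (hcyc : Dense (↑(Submodule.span ℂ (Set.range fun a : A => π a Ω)) : Set H))
    (β : ℝ) (hβ : 0 < β)
    (σ : ℝ → (A ≃⋆ₐ[ℂ] A))
    (hgroup : ∀ s t : ℝ, ∀ a : A, σ (s + t) a = σ s (σ t a))
    (hiso : ∀ (t : ℝ) (a : A), ‖σ t a‖ = ‖a‖)
    (hKMS : ∀ a b : A, ∃ F : ℂ → ℂ,
      DifferentiableOn ℂ F {z : ℂ | 0 < z.im ∧ z.im < β} ∧
      ContinuousOn F {z : ℂ | 0 ≤ z.im ∧ z.im ≤ β} ∧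
      (∃ C : ℝ, ∀ z : ℂ, 0 ≤ z.im → z.im ≤ β → ‖F z‖ ≤ C) ∧
      (∀ t : ℝ, F t = ⟪Ω, π (a * σ t b) Ω⟫_ℂ) ∧
      (∀ t : ℝ, F (t + I * β) = ⟪Ω, π (σ t b * a) Ω⟫_ℂ)) :
    ∀ a : A, π a Ω = 0 → π a = 0 := by
  intro a ha
  refine ContinuousLinearMap.ext_on hcyc ?_
  rintro _ ⟨b, rfl⟩
  obtain ⟨F, hd, hc, hb, hlow, hup⟩ := hKMS (star b * star a * a) b
  have hF : F 0 = 0 := strip_eq_zero hβ hd hc hb fun t => by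
    rw [hup]
    simp [map_mul, ha]
  -- A one-parameter group of automorphisms has `σ 0 = id`, by injectivity of `σ 0`.
  have hσ : σ 0 b = b := EquivLike.injective (σ 0) (by rw [← hgroup, add_zero])
  have h := hlow 0
  rw [ofReal_zero, hF, hσ, show star b * star a * a * b = star (a * b) * (a * b) by
    rw [star_mul]; simp only [mul_assoc], map_mul, map_star, ContinuousLinearMap.star_eq_adjoint,
    mul_apply_eq_comp, ContinuousLinearMap.adjoint_inner_right] at h
  simpa using inner_self_eq_zero.mp h.symm
end

section
/- Let H be a complex Hilbert space, A a star-subalgebra of the bounded operators on H containing the identity, Ω ∈ H, β > 0, and U : ℝ → B(H) a one-parameter group of unitary operators (U(s + t) = U(s) U(t), each U(t) unitary) such that U(t) Ω = Ω and U(t)* a U(t) ∈ A for every a ∈ A and t ∈ ℝ. Suppose that for all a, b ∈ A there exists a function F : ℂ → ℂ, differentiable on the open strip {z : 0 < Im z < β}, continuous and bounded on the closed strip {z : 0 ≤ Im z ≤ β}, such that F(t) = ⟪Ω, a U(t)* b U(t) Ω⟫ and F(t + I*β) = ⟪Ω, U(t)* b U(t) a Ω⟫ for every t ∈ ℝ.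 Then the same conclusion holds for all a, b in the double commutant A″: for all a, b ∈ A″ there exists such a function F with F(t) = ⟪Ω, a U(t)* b U(t) Ω⟫ and F(t + I*β) = ⟪Ω, U(t)* b U(t) a Ω⟫ for every t ∈ ℝ. -/
/-! The two functions prescribed on the boundary lines depend on `a` and `b` only through the
vectors `a Ω`, `a* Ω`, `b Ω`: since `U t Ω = Ω`, they are `⟪a* Ω, (U t)* b Ω⟫` and
`⟪b* Ω, U t a Ω⟫`. As `U t` is a contraction, approximating `x Ω` and `x* Ω` simultaneously,
for `x = a, b`, by elements of `A` makes the boundary values converge uniformly in `t`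
(`tendstoUniformly_inner`). By the maximum principle of Phragmén and Lindelöf the KMS functions of
the approximants then form a uniform Cauchy sequence on the closed strip, and their limit is the
function sought (`exists_strip_limit`).

No bound on the norms of the approximants is used, so the Kaplansky density theorem can be replaced
by a weaker density statement (`exists_seq_tendsto`), obtained in two steps. First, the projection
argument of the double commutant theorem, carried out on `H ⊕ H`, approximates an element of `A''`
on two vectors at once (`mem_closure_pair`). Second, the set of pairs `(x Ω, x* Ω)`, `x ∈ A`, is
convex, so by Hahn-Banach its norm closure is detected by functionals
`Re (⟪ξ, x Ω⟫ + ⟪η, x* Ω⟫) = Re (⟪ξ, x Ω⟫ + ⟪x η, Ω⟫)`; these are continuous in the pair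
`(x Ω, x η)`, to which the first step applies. -/


open scoped InnerProductSpace
open Complex

open Filter Topology

/-! ### Density of a star-algebra of operators in its double commutant -/

/-- The action of an element of the double commutant on two given vectors is approximated in norm,
on both at once, by elements of the unital star-algebra. -/
theorem mem_closure_pair
    {H : Type*} [NormedAddCommGroup H] [InnerProductSpace ℂ H] [CompleteSpace H]
    (A : StarSubalgebra ℂ (H →L[ℂ] H)) (a : H →L[ℂ] H)
    (ha : a ∈ Set.centralizer (Set.centralizer (A : Set (H →L[ℂ] H)))) (u v : H) :
    (a u, a v) ∈ closure {p : H × H | ∃ x ∈ A, p = (x u, x v)} := by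
  -- The `ℓ²` direct sum `H ⊕ H`, its two inclusions, and the diagonal action `D x = x ⊕ x`.
  let e := (WithLp.prodContinuousLinearEquiv 2 ℂ H H)
  let i₁ : H →L[ℂ] WithLp 2 (H × H) := e.symm.toContinuousLinearMap ∘L .inl ℂ H H
  let i₂ : H →L[ℂ] WithLp 2 (H × H) := e.symm.toContinuousLinearMap ∘L .inr ℂ H H
  let q₁ : WithLp 2 (H × H) →L[ℂ] H := .fst ℂ H H ∘L e.toContinuousLinearMap
  let q₂ : WithLp 2 (H × H) →L[ℂ] H := .snd ℂ H H ∘L e.toContinuousLinearMap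
  let D : (H →L[ℂ] H) → WithLp 2 (H × H) →L[ℂ] WithLp 2 (H × H) :=
    fun x => i₁ ∘L x ∘L q₁ + i₂ ∘L x ∘L q₂
  have hext : ∀ z w : WithLp 2 (H × H), q₁ z = q₁ w → q₂ z = q₂ w → z = w := fun z w h₁ h₂ =>
    e.injective (Prod.ext h₁ h₂)
  have q₁i₁ : ∀ h, q₁ (i₁ h) = h := fun h => rfl
  have q₁i₂ : ∀ h, q₁ (i₂ h) = 0 := fun h => rfl
  have q₂i₁ : ∀ h, q₂ (i₁ h) = 0 := fun h => rfl
  have q₂i₂ : ∀ h, q₂ (i₂ h) = h := fun h => rfl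
  have hdec : ∀ z, z = i₁ (q₁ z) + i₂ (q₂ z) := fun z => hext _ _
    (by rw [map_add, q₁i₁, q₁i₂, add_zero]) (by rw [map_add, q₂i₁, q₂i₂, zero_add])
  have hD : ∀ x z, D x z = i₁ (x (q₁ z)) + i₂ (x (q₂ z)) := fun x z => rfl
  have q₁D : ∀ x z, q₁ (D x z) = x (q₁ z) := fun x z => by
    rw [hD, map_add, q₁i₁, q₁i₂, add_zero]
  have q₂D : ∀ x z, q₂ (D x z) = x (q₂ z) := fun x z => by
    rw [hD, map_add, q₂i₁, q₂i₂, zero_add]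
  have Di₁ : ∀ x h, D x (i₁ h) = i₁ (x h) := fun x h => by
    rw [hD, q₁i₁, q₂i₁, map_zero, map_zero, add_zero]
  have Di₂ : ∀ x h, D x (i₂ h) = i₂ (x h) := fun x h => by
    rw [hD, q₁i₂, q₂i₂, map_zero, map_zero, zero_add]
  have hinner : ∀ z w : WithLp 2 (H × H), ⟪z, w⟫_ℂ = ⟪q₁ z, q₁ w⟫_ℂ + ⟪q₂ z, q₂ w⟫_ℂ :=
    fun z w => WithLp.prod_inner_apply z w
  have hadj : ∀ x z w, ⟪w, D x z⟫_ℂ = ⟪D (star x) w, z⟫_ℂ := fun x z w => by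
    simp only [hinner, q₁D, q₂D, ContinuousLinearMap.star_eq_adjoint,
      ContinuousLinearMap.adjoint_inner_left]
  let w₀ : WithLp 2 (H × H) := i₁ u + i₂ v
  let M₀ : Submodule ℂ (WithLp 2 (H × H)) :=
    { carrier := {z | ∃ x ∈ A, z = D x w₀}
      add_mem' := by
        rintro _ _ ⟨x, hx, rfl⟩ ⟨y, hy, rfl⟩
        refine ⟨x + y, add_mem hx hy, ?_⟩
        simp only [hD, add_apply, map_add]
        abel
      zero_mem' := ⟨0, zero_mem _, by simp [hD]⟩
      smul_mem' := by
        rintro c _ ⟨x, hx, rfl⟩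
        refine ⟨c • x, A.smul_mem hx c, ?_⟩
        simp only [hD, smul_apply, map_smul, smul_add] }
  let M := M₀.topologicalClosure
  have hMc : IsClosed (M : Set (WithLp 2 (H × H))) := M₀.isClosed_topologicalClosure
  have : CompleteSpace M := hMc.completeSpace_coe
  have hDM : ∀ x ∈ A, ∀ z ∈ M, D x z ∈ M := by
    intro x hx z hz
    have : Set.MapsTo (D x) (M₀ : Set (WithLp 2 (H × H))) M₀ := by
      rintro _ ⟨y, hy, rfl⟩
      refine ⟨x * y, mul_mem hx hy, ?_⟩
      refine hext _ _ ?_ ?_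
      · simp only [q₁D, mul_apply_eq_comp]
      · simp only [q₂D, mul_apply_eq_comp]
    exact this.closure (D x).continuous hz
  let P := M.starProjection
  have hPD : ∀ x ∈ A, ∀ z, P (D x z) = D x (P z) := by
    intro x hx z
    refine Submodule.eq_starProjection_of_mem_orthogonal
      (hDM x hx _ (Submodule.starProjection_apply_mem M z)) ?_
    rw [← map_sub, Submodule.mem_orthogonal]
    intro w hw
    rw [hadj]
    exact (Submodule.mem_orthogonal _ _).1 (Submodule.sub_starProjection_mem_orthogonal z) _
      (hDM _ (star_mem hx) w hw)
  -- The four matrix entries of `P` lie in the commutant of `A`, hence commute with `a`.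
  have hcomm : ∀ (q : WithLp 2 (H × H) →L[ℂ] H) (i : H →L[ℂ] WithLp 2 (H × H)),
      (∀ x z, q (D x z) = x (q z)) → (∀ x h, D x (i h) = i (x h)) →
      ∀ h, q (P (i (a h))) = a (q (P (i h))) := by
    intro q i hq hi h
    have hmem : q ∘L P ∘L i ∈ Set.centralizer (A : Set (H →L[ℂ] H)) := by
      rw [Set.mem_centralizer_iff]
      intro x hx
      ext h
      change x (q (P (i h))) = q (P (i (x h)))
      rw [← hi, hPD x hx, hq]
    exact congrArg (fun T : H →L[ℂ] H => T h) (Set.mem_centralizer_iff.1 ha _ hmem)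
  have hPa : ∀ z, P (D a z) = D a (P z) := by
    intro z
    rw [hdec z]
    simp only [map_add, Di₁, Di₂]
    refine congrArg₂ (· + ·) (hext _ _ ?_ ?_) (hext _ _ ?_ ?_)
    · rw [q₁D, hcomm q₁ i₁ q₁D Di₁]
    · rw [q₂D, hcomm q₂ i₁ q₂D Di₁]
    · rw [q₁D, hcomm q₁ i₂ q₁D Di₂]
    · rw [q₂D, hcomm q₂ i₂ q₂D Di₂]
  have hw₀ : w₀ ∈ M := M₀.le_topologicalClosure
    ⟨1, one_mem A, by rw [hD]; exact hdec w₀⟩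
  have haw : D a w₀ ∈ M := by
    have h1 : P w₀ = w₀ := Submodule.starProjection_eq_self_iff.2 hw₀
    rw [← h1, ← hPa]
    exact Submodule.starProjection_apply_mem M _
  have hew : ∀ x, e (D x w₀) = (x u, x v) := by
    intro x
    have h1 : q₁ w₀ = u := by simp only [w₀, map_add, q₁i₁, q₁i₂, add_zero]
    have h2 : q₂ w₀ = v := by simp only [w₀, map_add, q₂i₁, q₂i₂, zero_add]
    refine Prod.ext ?_ ?_
    · exact (q₁D x w₀).trans (by rw [h1])
    · exact (q₂D x w₀).trans (by rw [h2])
  rw [← hew a]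
  have haw' : D a w₀ ∈ closure (M₀ : Set (WithLp 2 (H × H))) := haw
  refine map_mem_closure e.continuous haw' ?_
  rintro _ ⟨x, hx, rfl⟩
  exact ⟨x, hx, hew x⟩

/-- An element of the double commutant is approximated by elements of the algebra on the vector
`Ω` together with its adjoint. -/
theorem exists_seq_tendsto
    {H : Type*} [NormedAddCommGroup H] [InnerProductSpace ℂ H] [CompleteSpace H]
    (A : StarSubalgebra ℂ (H →L[ℂ] H)) (Ω : H) (a : H →L[ℂ] H)
    (ha : a ∈ Set.centralizer (Set.centralizer (A : Set (H →L[ℂ] H)))) :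
    ∃ c : ℕ → (H →L[ℂ] H), (∀ n, c n ∈ A) ∧ Tendsto (fun n => c n Ω) atTop (𝓝 (a Ω)) ∧
      Tendsto (fun n => star (c n) Ω) atTop (𝓝 (star a Ω)) := by
  let S : Set (H × H) := {p | ∃ x ∈ A, p = (x Ω, star x Ω)}
  suffices h : (a Ω, star a Ω) ∈ closure S by
    obtain ⟨p, hp, hlim⟩ := mem_closure_iff_seq_limit.1 h
    choose c hc hpc using hp
    refine ⟨c, hc, ?_, ?_⟩
    · exact ((continuous_fst.tendsto _).comp hlim).congr fun n => by simp [hpc]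
    · exact ((continuous_snd.tendsto _).comp hlim).congr fun n => by simp [hpc]
  have hconv : Convex ℝ S := by
    rintro _ ⟨x, hx, rfl⟩ _ ⟨y, hy, rfl⟩ s t - - -
    refine ⟨(s : ℂ) • x + (t : ℂ) • y, add_mem (A.smul_mem hx _) (A.smul_mem hy _), ?_⟩
    simp [star_add, star_smul]
  by_contra hnot
  obtain ⟨l, r, hl, hr⟩ := RCLike.geometric_hahn_banach_closed_point (𝕜 := ℂ)
    hconv.closure isClosed_closure hnot
  let ξ : H := (InnerProductSpace.toDual ℂ H).symm (l ∘L .inl ℂ H H)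
  let η : H := (InnerProductSpace.toDual ℂ H).symm (l ∘L .inr ℂ H H)
  have hlval : ∀ x : H →L[ℂ] H, RCLike.re (l (x Ω, star x Ω)) =
      RCLike.re (⟪ξ, x Ω⟫_ℂ + ⟪x η, Ω⟫_ℂ) := by
    intro x
    congr 1
    have h1 : ⟪ξ, x Ω⟫_ℂ = l (x Ω, 0) := InnerProductSpace.toDual_symm_apply
    have h2 : ⟪η, star x Ω⟫_ℂ = l (0, star x Ω) := InnerProductSpace.toDual_symm_apply
    rw [ContinuousLinearMap.star_eq_adjoint, ContinuousLinearMap.adjoint_inner_right] at h2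
    rw [h1, h2, ContinuousLinearMap.star_eq_adjoint, ← map_add]
    simp
  have hcont : Continuous fun p : H × H => RCLike.re (⟪ξ, p.1⟫_ℂ + ⟪p.2, Ω⟫_ℂ) := by
    fun_prop
  have hmaps : Set.MapsTo (fun p : H × H => RCLike.re (⟪ξ, p.1⟫_ℂ + ⟪p.2, Ω⟫_ℂ))
      {p : H × H | ∃ x ∈ A, p = (x Ω, x η)} (Set.Iic r) := by
    rintro _ ⟨x, hx, rfl⟩
    have := hl _ (subset_closure ⟨x, hx, rfl⟩)
    rw [hlval] at this
    exact this.le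
  have hle := hmaps.closure hcont (mem_closure_pair A a ha Ω η)
  rw [isClosed_Iic.closure_eq, Set.mem_Iic] at hle
  rw [hlval] at hr
  exact absurd hr (not_lt.2 hle)

/-! ### Bounded holomorphic functions on a strip -/

/-- The maximum principle on a horizontal strip, in the form used for KMS functions. -/
theorem norm_le_of_norm_le_boundary {β : ℝ} (hβ : 0 < β) {f : ℂ → ℂ} {ε : ℝ}
    (hd : DifferentiableOn ℂ f {z : ℂ | 0 < z.im ∧ z.im < β})
    (hc : ContinuousOn f {z : ℂ | 0 ≤ z.im ∧ z.im ≤ β})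
    (hb : ∃ C : ℝ, ∀ z : ℂ, 0 ≤ z.im → z.im ≤ β → ‖f z‖ ≤ C)
    (h0 : ∀ t : ℝ, ‖f t‖ ≤ ε) (h1 : ∀ t : ℝ, ‖f (t + I * β)‖ ≤ ε)
    (z : ℂ) (hz0 : 0 ≤ z.im) (hz1 : z.im ≤ β) : ‖f z‖ ≤ ε := by
  obtain ⟨C, hC⟩ := hb
  have hclosed : IsClosed {z : ℂ | 0 ≤ z.im ∧ z.im ≤ β} :=
    (isClosed_le continuous_const continuous_im).inter
      (isClosed_le continuous_im continuous_const)
  have hcl : closure (im ⁻¹' Set.Ioo 0 β) ⊆ {z : ℂ | 0 ≤ z.im ∧ z.im ≤ β} :=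
    closure_minimal (fun z hz => ⟨hz.1.le, hz.2.le⟩) hclosed
  refine PhragmenLindelof.horizontal_strip (a := 0) (b := β) ⟨hd, hc.mono hcl⟩ ?_ ?_ ?_ hz0 hz1
  · refine ⟨0, by rw [sub_zero]; positivity, 0, ?_⟩
    refine Asymptotics.IsBigO.of_bound C ?_
    refine eventually_inf_principal.2 (Eventually.of_forall fun z hz => ?_)
    simpa using hC z hz.1.le hz.2.le
  · intro z hz
    have : z = (z.re : ℂ) := by apply Complex.ext <;> simp [hz]
    rw [this]
    exact h0 _
  · intro z hz
    have : z = (z.re : ℂ) + I * β := by apply Complex.ext <;> simp [hz]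
    rw [this]
    exact h1 _

/-- If bounded functions that are holomorphic on a strip and continuous up to the boundary have
uniformly convergent boundary values, then the limits are again the boundary values of such a
function. -/
theorem exists_strip_limit {β : ℝ} (hβ : 0 < β) (F : ℕ → ℂ → ℂ) (g h : ℝ → ℂ)
    (hd : ∀ n, DifferentiableOn ℂ (F n) {z : ℂ | 0 < z.im ∧ z.im < β})
    (hc : ∀ n, ContinuousOn (F n) {z : ℂ | 0 ≤ z.im ∧ z.im ≤ β})
    (hb : ∀ n, ∃ C : ℝ, ∀ z : ℂ, 0 ≤ z.im → z.im ≤ β → ‖F n z‖ ≤ C)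
    (hg : TendstoUniformly (fun n (t : ℝ) => F n t) g atTop)
    (hh : TendstoUniformly (fun n (t : ℝ) => F n (t + I * β)) h atTop) :
    ∃ f : ℂ → ℂ,
      DifferentiableOn ℂ f {z : ℂ | 0 < z.im ∧ z.im < β} ∧
      ContinuousOn f {z : ℂ | 0 ≤ z.im ∧ z.im ≤ β} ∧
      (∃ C : ℝ, ∀ z : ℂ, 0 ≤ z.im → z.im ≤ β → ‖f z‖ ≤ C) ∧
      (∀ t : ℝ, f t = g t) ∧ (∀ t : ℝ, f (t + I * β) = h t) := by
  have hcauchy : UniformCauchySeqOn F atTop {z : ℂ | 0 ≤ z.im ∧ z.im ≤ β} := by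
    rw [Metric.uniformCauchySeqOn_iff]
    intro ε hε
    obtain ⟨N, hN⟩ := eventually_atTop.1
      ((Metric.tendstoUniformly_iff.1 hg (ε / 4) (by positivity)).and
        (Metric.tendstoUniformly_iff.1 hh (ε / 4) (by positivity)))
    refine ⟨N, fun m hm n hn z hz => ?_⟩
    have key : ‖F m z - F n z‖ ≤ ε / 2 := by
      refine norm_le_of_norm_le_boundary hβ (f := fun z => F m z - F n z)
        ((hd m).sub (hd n)) ((hc m).sub (hc n)) ?_ ?_ ?_ z hz.1 hz.2
      · obtain ⟨C, hC⟩ := hb m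
        obtain ⟨C', hC'⟩ := hb n
        exact ⟨C + C', fun z h0 h1 => (norm_sub_le _ _).trans (add_le_add (hC z h0 h1) (hC' z h0 h1))⟩
      · intro t
        have h1 := (hN m hm).1 t
        have h2 := (hN n hn).1 t
        rw [← dist_eq_norm]
        linarith [dist_triangle_left (F m t) (F n t) (g t)]
      · intro t
        have h1 := (hN m hm).2 t
        have h2 := (hN n hn).2 t
        rw [← dist_eq_norm]
        linarith [dist_triangle_left (F m (t + I * β)) (F n (t + I * β)) (h t)]
    rw [dist_eq_norm]
    linarith
  have hlim : ∀ z : ℂ, ∃ w, z ∈ {z : ℂ | 0 ≤ z.im ∧ z.im ≤ β} →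
      Tendsto (fun n => F n z) atTop (𝓝 w) := by
    intro z
    by_cases hz : z ∈ {z : ℂ | 0 ≤ z.im ∧ z.im ≤ β}
    · obtain ⟨w, hw⟩ := cauchySeq_tendsto_of_complete (hcauchy.cauchySeq hz)
      exact ⟨w, fun _ => hw⟩
    · exact ⟨0, fun h => absurd h hz⟩
  choose f hf using hlim
  have hunif := hcauchy.tendstoUniformlyOn_of_tendsto hf
  have hopen : IsOpen {z : ℂ | 0 < z.im ∧ z.im < β} :=
    (isOpen_lt continuous_const continuous_im).inter (isOpen_lt continuous_im continuous_const)
  refine ⟨f, ?_, hunif.continuousOn (Frequently.of_forall hc), ?_, fun t => ?_, fun t => ?_⟩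
  · exact (hunif.mono fun z hz => ⟨hz.1.le, hz.2.le⟩).tendstoLocallyUniformlyOn.differentiableOn
      (Eventually.of_forall hd) hopen
  · obtain ⟨n, hn⟩ := (Metric.tendstoUniformlyOn_iff.1 hunif 1 one_pos).exists
    obtain ⟨C, hC⟩ := hb n
    refine ⟨1 + C, fun z h0 h1 => ?_⟩
    have h2 := hn z ⟨h0, h1⟩
    rw [dist_eq_norm] at h2
    have h3 := norm_le_norm_sub_add (f z) (F n z)
    linarith [hC z h0 h1]
  · exact tendsto_nhds_unique (hf t ⟨by simp, by simpa using hβ.le⟩) (hg.tendsto_at t)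
  · exact tendsto_nhds_unique (hf _ ⟨by simpa using hβ.le, by simp⟩) (hh.tendsto_at t)

/-! ### The KMS condition on the double commutant -/

/-- Matrix coefficients of a family of contractions converge uniformly over the family when the
two vectors converge. -/
theorem tendstoUniformly_inner
    {H : Type*} [NormedAddCommGroup H] [InnerProductSpace ℂ H]
    (V : ℝ → (H →L[ℂ] H)) (hV : ∀ t x, ‖V t x‖ ≤ ‖x‖) {x y : ℕ → H} {x₀ y₀ : H}
    (hx : Tendsto x atTop (𝓝 x₀)) (hy : Tendsto y atTop (𝓝 y₀)) :
    TendstoUniformly (fun n (t : ℝ) => ⟪x n, V t (y n)⟫_ℂ) (fun t => ⟪x₀, V t y₀⟫_ℂ) atTop := by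
  rw [Metric.tendstoUniformly_iff]
  intro ε hε
  have hlim : Tendsto (fun n => ‖x₀ - x n‖ * ‖y₀‖ + ‖x n‖ * ‖y₀ - y n‖) atTop (𝓝 0) := by
    have := ((hx.const_sub x₀).norm.mul_const ‖y₀‖).add (hx.norm.mul (hy.const_sub y₀).norm)
    simpa using this
  filter_upwards [hlim.eventually_lt_const hε] with n hn t
  refine lt_of_le_of_lt ?_ hn
  have hsplit : ⟪x₀, V t y₀⟫_ℂ - ⟪x n, V t (y n)⟫_ℂ
      = ⟪x₀ - x n, V t y₀⟫_ℂ + ⟪x n, V t (y₀ - y n)⟫_ℂ := by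
    rw [inner_sub_left, map_sub, inner_sub_right]
    ring
  rw [dist_eq_norm, hsplit]
  refine (norm_add_le _ _).trans (add_le_add ?_ ?_)
  · exact (norm_inner_le_norm _ _).trans (by gcongr; exact hV _ _)
  · exact (norm_inner_le_norm _ _).trans (by gcongr; exact hV _ _)

/-- Extension of the KMS (thermal equilibrium) condition from a C*-algebra to the von Neumann
algebra it generates: if the vector state of `Ω` satisfies the KMS condition at inverse
temperature `β > 0` for the conjugation flow of a one-parameter unitary group `U` on all
elements of a star-subalgebra `A` containing the identity, then it satisfies the KMS condition
on all elements of the double commutant `A''`. -/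
theorem kms_extends_to_double_commutant
    {H : Type*} [NormedAddCommGroup H] [InnerProductSpace ℂ H] [CompleteSpace H]
    (A : StarSubalgebra ℂ (H →L[ℂ] H)) (Ω : H) (β : ℝ) (hβ : 0 < β)
    (U : ℝ → (H →L[ℂ] H))
    (hgroup : ∀ s t : ℝ, U (s + t) = U s * U t)
    (hunitary : ∀ t : ℝ, U t ∈ unitary (H →L[ℂ] H))
    (hΩ : ∀ t : ℝ, U t Ω = Ω)
    (hstab : ∀ a ∈ A, ∀ t : ℝ, star (U t) * a * U t ∈ A)
    (hKMS : ∀ a ∈ A, ∀ b ∈ A, ∃ F : ℂ → ℂ,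
      DifferentiableOn ℂ F {z : ℂ | 0 < z.im ∧ z.im < β} ∧
      ContinuousOn F {z : ℂ | 0 ≤ z.im ∧ z.im ≤ β} ∧
      (∃ C : ℝ, ∀ z : ℂ, 0 ≤ z.im → z.im ≤ β → ‖F z‖ ≤ C) ∧
      (∀ t : ℝ, F t = ⟪Ω, (a * (star (U t) * b * U t)) Ω⟫_ℂ) ∧
      (∀ t : ℝ, F (t + I * β) = ⟪Ω, ((star (U t) * b * U t) * a) Ω⟫_ℂ)) :
    ∀ a ∈ Set.centralizer (Set.centralizer (A : Set (H →L[ℂ] H))),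
      ∀ b ∈ Set.centralizer (Set.centralizer (A : Set (H →L[ℂ] H))),
        ∃ F : ℂ → ℂ,
          DifferentiableOn ℂ F {z : ℂ | 0 < z.im ∧ z.im < β} ∧
          ContinuousOn F {z : ℂ | 0 ≤ z.im ∧ z.im ≤ β} ∧
          (∃ C : ℝ, ∀ z : ℂ, 0 ≤ z.im → z.im ≤ β → ‖F z‖ ≤ C) ∧
          (∀ t : ℝ, F t = ⟪Ω, (a * (star (U t) * b * U t)) Ω⟫_ℂ) ∧
          (∀ t : ℝ, F (t + I * β) = ⟪Ω, ((star (U t) * b * U t) * a) Ω⟫_ℂ) := by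
  intro a ha b hb
  obtain ⟨c, hcA, hc, hc'⟩ := exists_seq_tendsto A Ω a ha
  obtain ⟨d, hdA, hd, hd'⟩ := exists_seq_tendsto A Ω b hb
  have hUU : ∀ t, star (U t) * U t = 1 := fun t => (Unitary.mem_iff.1 (hunitary t)).1
  have hUU' : ∀ t, U t * star (U t) = 1 := fun t => (Unitary.mem_iff.1 (hunitary t)).2
  have hisom : ∀ T : H →L[ℂ] H, star T * T = 1 → ∀ x, ‖T x‖ ≤ ‖x‖ := by
    intro T hT x
    refine ((ContinuousLinearMap.norm_map_iff_adjoint_comp_self T).2 ?_ x).le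
    rw [← ContinuousLinearMap.star_eq_adjoint]
    exact hT
  have hbot : ∀ (x y : H →L[ℂ] H) (t : ℝ),
      ⟪Ω, (x * (star (U t) * y * U t)) Ω⟫_ℂ = ⟪star x Ω, star (U t) (y Ω)⟫_ℂ := by
    intro x y t
    simp only [mul_apply_eq_comp, hΩ]
    rw [ContinuousLinearMap.star_eq_adjoint x, ContinuousLinearMap.adjoint_inner_left]
  have htop : ∀ (x y : H →L[ℂ] H) (t : ℝ),
      ⟪Ω, ((star (U t) * y * U t) * x) Ω⟫_ℂ = ⟪star y Ω, U t (x Ω)⟫_ℂ := by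
    intro x y t
    simp only [mul_apply_eq_comp, ContinuousLinearMap.star_eq_adjoint]
    rw [ContinuousLinearMap.adjoint_inner_right, hΩ, ContinuousLinearMap.adjoint_inner_left]
  choose F hFd hFc hFb hF0 hF1 using fun n => hKMS (c n) (hcA n) (d n) (hdA n)
  simp only [hbot, htop] at hF0 hF1 ⊢
  refine exists_strip_limit hβ F _ _ hFd hFc hFb ?_ ?_
  · simp only [hF0]
    exact tendstoUniformly_inner (fun t => star (U t))
      (fun t => hisom _ (by rw [star_star]; exact hUU' t)) hc' hd
  · simp only [hF1]
    exact tendstoUniformly_inner U (fun t => hisom _ (hUU t)) hd' hc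
end

section
/- Let H_c and H_p be complex Hilbert spaces, u : H_c → H_p a linear isometry, and M_code ⊆ B(H_c), M_phys ⊆ B(H_p) star-subalgebras containing the identity that equal their own double commutants (M_code = M_code″, M_phys = M_phys″). Suppose: (i) there exists Ω ∈ H_c such that u Ω is cyclic and separating with respect to M_phys; (ii) for every O ∈ M_code there exists Õ ∈ M_phys with u (O θ) = Õ (u θ) and u (O* θ) = Õ* (u θ) for all θ ∈ H_c; and (iii) for every O′ in the commutant M_code′ there exists Õ′ in the commutant M_phys′ with u (O′ θ) = Õ′ (u θ) and u (O′* θ) = Õ′* (u θ) for all θ ∈ H_c. Then for every Ψ ∈ H_c that is cyclic and separating with respect to M_code, the vector u Ψ is cyclic and separating with respect to M_phys, and also cyclic and separating with respect to M_phys′. -/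
/-!
The annihilator trick relating a self-adjoint algebra to its commutant: the orthogonal projection
onto `[T Ω]ᗮ` lies in the commutant of `T` and kills `Ω`, so a vector separating for the commutant
is cyclic for `T` (`isCyclicVector_of_isSeparatingVector_centralizer`).

If `x ∈ M_phys` kills `u Ψ`, then `x` kills `Õ' (u Ψ) = u (O' Ψ)` for each `O' ∈ M_code'`. Since `Ψ`
is separating for `M_code = M_code''`, it is cyclic for `M_code'`, so `x` vanishes on the range of
`u`; in particular it kills `u Ω`, whence `x = 0`. The same argument with `M_code` and `M_code'`
exchanged shows that `u Ψ` is separating for `M_phys'`, where `u Ω` is separating because it is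
cyclic for `M_phys`. Cyclicity of `u Ψ` for each of the two algebras follows from
separation for its commutant.
-/

/-- A vector `Ω` is cyclic for a set `S` of bounded operators on `H` when `{x Ω : x ∈ S}`
spans a dense subspace of `H`. -/
def IsCyclicVector {H : Type*} [NormedAddCommGroup H] [InnerProductSpace ℂ H]
    (S : Set (H →L[ℂ] H)) (Ω : H) : Prop :=
  Dense (↑(Submodule.span ℂ {y : H | ∃ x ∈ S, x Ω = y}) : Set H)

/-- A vector `Ω` is separating for a set `S` of bounded operators on `H` when the only
element of `S` annihilating `Ω` is zero. -/
def IsSeparatingVector {H : Type*} [NormedAddCommGroup H] [InnerProductSpace ℂ H]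
    (S : Set (H →L[ℂ] H)) (Ω : H) : Prop :=
  ∀ x ∈ S, x Ω = 0 → x = 0

/-- For a self-adjoint unital algebra `T`, a vector separating for the commutant is cyclic for `T`:
the projection onto the orthogonal complement of `T Ω` is in the commutant and annihilates `Ω`. -/
theorem isCyclicVector_of_isSeparatingVector_centralizer
    {H : Type*} [NormedAddCommGroup H] [InnerProductSpace ℂ H] [CompleteSpace H]
    (T : StarSubalgebra ℂ (H →L[ℂ] H)) {Ω : H}
    (h : IsSeparatingVector (Set.centralizer (T : Set (H →L[ℂ] H))) Ω) :
    IsCyclicVector (T : Set (H →L[ℂ] H)) Ω := by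
  set K : Submodule ℂ H := Submodule.span ℂ {y : H | ∃ x ∈ (T : Set (H →L[ℂ] H)), x Ω = y}
    with hK
  have hinv : ∀ y ∈ T, ∀ v ∈ K, y v ∈ K := by
    intro y hy v hv
    induction hv using Submodule.span_induction with
    | mem v hv =>
      obtain ⟨x, hx, rfl⟩ := hv
      exact Submodule.subset_span ⟨y * x, T.mul_mem hy hx, rfl⟩
    | zero => simp
    | add a b _ _ ha hb => rw [map_add]; exact K.add_mem ha hb
    | smul c a _ ha => rw [map_smul]; exact K.smul_mem c ha
  have hinvo : ∀ y ∈ T, ∀ v ∈ Kᗮ, y v ∈ Kᗮ := by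
    intro y hy v hv
    rw [Submodule.mem_orthogonal] at hv ⊢
    intro w hw
    rw [← ContinuousLinearMap.adjoint_inner_left]
    exact hv _ (hinv _ (T.star_mem' hy) w hw)
  have hinvoo : ∀ y ∈ T, ∀ v ∈ Kᗮᗮ, y v ∈ Kᗮᗮ := by
    intro y hy v hv
    rw [Submodule.mem_orthogonal] at hv ⊢
    intro w hw
    rw [← ContinuousLinearMap.adjoint_inner_left]
    exact hv _ (hinvo _ (T.star_mem' hy) w hw)
  have hP : Kᗮ.starProjection ∈ Set.centralizer (T : Set (H →L[ℂ] H)) := by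
    rw [Set.mem_centralizer_iff]
    intro y hy
    ext v
    -- `y v` decomposes along `Kᗮ ⊕ Kᗮᗮ` as the image of the decomposition of `v`
    have h1 := hinvo y hy _ (Kᗮ.starProjection_apply_mem v)
    have h2 := hinvoo y hy _ (Kᗮ.sub_starProjection_mem_orthogonal v)
    exact (Submodule.eq_starProjection_of_mem_orthogonal h1 (by simpa using h2)).symm
  have hΩK : Ω ∈ K := Submodule.subset_span ⟨1, T.one_mem, rfl⟩
  have hP0 : Kᗮ.starProjection = 0 :=
    h _ hP ((Submodule.starProjection_apply_eq_zero_iff Kᗮ).mpr (K.le_orthogonal_orthogonal hΩK))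
  rw [IsCyclicVector, ← hK, Submodule.dense_iff_topologicalClosure_eq_top,
    Submodule.topologicalClosure_eq_top_iff, Submodule.eq_bot_iff]
  intro v hv
  rw [← Submodule.starProjection_eq_self_iff.mpr hv, hP0]
  rfl

theorem isSeparatingVector_centralizer_of_isCyclicVector
    {H : Type*} [NormedAddCommGroup H] [InnerProductSpace ℂ H]
    {S : Set (H →L[ℂ] H)} {Ω : H} (h : IsCyclicVector S Ω) :
    IsSeparatingVector (Set.centralizer S) Ω := by
  intro x hx hx0
  refine ContinuousLinearMap.ext_on h ?_
  rintro _ ⟨y, hy, rfl⟩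
  have hc := congrArg (fun z : H →L[ℂ] H => z Ω) (Set.mem_centralizer_iff.mp hx y hy)
  simpa [hx0] using hc.symm

theorem coe_centralizer_starSubalgebra
    {H : Type*} [NormedAddCommGroup H] [InnerProductSpace ℂ H] [CompleteSpace H]
    (T : StarSubalgebra ℂ (H →L[ℂ] H)) :
    (StarSubalgebra.centralizer ℂ (T : Set (H →L[ℂ] H)) : Set (H →L[ℂ] H))
      = Set.centralizer (T : Set (H →L[ℂ] H)) := by
  rw [StarSubalgebra.coe_centralizer, StarMemClass.star_coe_eq, Set.union_self]

/-- Separation propagates along `u`: if each operator of `A` is implemented on the range of `u` by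
an operator commuting with `S`, and `Ψ` is cyclic for `A`, then an element of `S` killing `u Ψ`
vanishes on the range of `u`, hence kills the separating vector `u Ω` and is zero. -/
theorem isSeparatingVector_of_implemented
    {Hc Hp : Type*} [NormedAddCommGroup Hc] [InnerProductSpace ℂ Hc]
    [NormedAddCommGroup Hp] [InnerProductSpace ℂ Hp]
    (u : Hc →ₗᵢ[ℂ] Hp) {A : Set (Hc →L[ℂ] Hc)} {S : Set (Hp →L[ℂ] Hp)} {Ω Ψ : Hc}
    (hrec : ∀ O ∈ A, ∃ Q ∈ Set.centralizer S, ∀ θ : Hc, u (O θ) = Q (u θ))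
    (hΩ : IsSeparatingVector S (u Ω)) (hΨ : IsCyclicVector A Ψ) :
    IsSeparatingVector S (u Ψ) := by
  intro x hx hx0
  have hxu : x.comp u.toContinuousLinearMap = 0 := by
    refine ContinuousLinearMap.ext_on hΨ ?_
    rintro _ ⟨O, hO, rfl⟩
    obtain ⟨Q, hQ, hQu⟩ := hrec O hO
    have hc := congrArg (fun z : Hp →L[ℂ] Hp => z (u Ψ)) (Set.mem_centralizer_iff.mp hQ x hx)
    simpa [hx0, hQu] using hc
  exact hΩ x hx (congrArg (fun z : Hc →L[ℂ] Hp => z Ω) hxu)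

/-- Cyclic-and-separating propagation (part of the Kang–Kolchmeyer theorem on
infinite-dimensional entanglement wedge reconstruction): if some `u Ω` is cyclic and
separating for the von Neumann algebra `M_phys`, and bulk reconstruction holds for `M_code`
and for its commutant, then `u Ψ` is cyclic and separating with respect to `M_phys` and with
respect to `M_phys'` whenever `Ψ` is cyclic and separating with respect to `M_code`. -/
theorem cyclic_separating_propagation
    {Hc Hp : Type*}
    [NormedAddCommGroup Hc] [InnerProductSpace ℂ Hc] [CompleteSpace Hc]
    [NormedAddCommGroup Hp] [InnerProductSpace ℂ Hp] [CompleteSpace Hp]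
    (u : Hc →ₗᵢ[ℂ] Hp)
    (Mcode : StarSubalgebra ℂ (Hc →L[ℂ] Hc))
    (Mphys : StarSubalgebra ℂ (Hp →L[ℂ] Hp))
    (hMcode : Set.centralizer (Set.centralizer (Mcode : Set (Hc →L[ℂ] Hc)))
      = (Mcode : Set (Hc →L[ℂ] Hc)))
    (hMphys : Set.centralizer (Set.centralizer (Mphys : Set (Hp →L[ℂ] Hp)))
      = (Mphys : Set (Hp →L[ℂ] Hp)))
    (hΩ : ∃ Ω : Hc, IsCyclicVector (Mphys : Set (Hp →L[ℂ] Hp)) (u Ω) ∧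
      IsSeparatingVector (Mphys : Set (Hp →L[ℂ] Hp)) (u Ω))
    (hrec : ∀ O ∈ Mcode, ∃ Otilde ∈ Mphys,
      (∀ θ : Hc, u (O θ) = Otilde (u θ)) ∧
      (∀ θ : Hc, u (star O θ) = star Otilde (u θ)))
    (hrec' : ∀ O' ∈ Set.centralizer (Mcode : Set (Hc →L[ℂ] Hc)),
      ∃ Otilde' ∈ Set.centralizer (Mphys : Set (Hp →L[ℂ] Hp)),
      (∀ θ : Hc, u (O' θ) = Otilde' (u θ)) ∧
      (∀ θ : Hc, u (star O' θ) = star Otilde' (u θ))) :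
    ∀ Ψ : Hc,
      IsCyclicVector (Mcode : Set (Hc →L[ℂ] Hc)) Ψ →
      IsSeparatingVector (Mcode : Set (Hc →L[ℂ] Hc)) Ψ →
      (IsCyclicVector (Mphys : Set (Hp →L[ℂ] Hp)) (u Ψ) ∧
        IsSeparatingVector (Mphys : Set (Hp →L[ℂ] Hp)) (u Ψ)) ∧
      (IsCyclicVector (Set.centralizer (Mphys : Set (Hp →L[ℂ] Hp))) (u Ψ) ∧
        IsSeparatingVector (Set.centralizer (Mphys : Set (Hp →L[ℂ] Hp))) (u Ψ)) := by
  obtain ⟨Ω, hΩc, hΩs⟩ := hΩ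
  intro Ψ hΨc hΨs
  have hΨc' : IsCyclicVector (Set.centralizer (Mcode : Set (Hc →L[ℂ] Hc))) Ψ := by
    rw [← coe_centralizer_starSubalgebra]
    apply isCyclicVector_of_isSeparatingVector_centralizer
    rwa [coe_centralizer_starSubalgebra, hMcode]
  have hs : IsSeparatingVector (Mphys : Set (Hp →L[ℂ] Hp)) (u Ψ) := by
    refine isSeparatingVector_of_implemented u (fun O hO => ?_) hΩs hΨc'
    obtain ⟨Q, hQ, hQu, -⟩ := hrec' O hO
    exact ⟨Q, hQ, hQu⟩
  have hs' : IsSeparatingVector (Set.centralizer (Mphys : Set (Hp →L[ℂ] Hp))) (u Ψ) := by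
    refine isSeparatingVector_of_implemented u (fun O hO => ?_)
      (isSeparatingVector_centralizer_of_isCyclicVector hΩc) hΨc
    obtain ⟨Q, hQ, hQu, -⟩ := hrec O hO
    exact ⟨Q, Set.subset_centralizer_centralizer hQ, hQu⟩
  refine ⟨⟨isCyclicVector_of_isSeparatingVector_centralizer Mphys hs', hs⟩, ?_, hs'⟩
  rw [← coe_centralizer_starSubalgebra]
  apply isCyclicVector_of_isSeparatingVector_centralizer
  rwa [coe_centralizer_starSubalgebra, hMphys]
end

section
/- Let H be a complex Hilbert space and M a star-subalgebra of the bounded operators on H containing the identity with M = M″ (a von Neumann algebra). Let Ψ ∈ H be cyclic and separating with respect to M, and let Φ ∈ H. If (O_n) is a sequence in M such that O_n Ψ → 0 and the sequence (O_n* Φ) converges to some y ∈ H, then y = 0. Consequently the relative Tomita operator S_{Ψ|Φ}, defined on vectors of the form lim O_n Ψ by S_{Ψ|Φ}(lim O_n Ψ) = lim O_n* Φ, is well defined on a dense subspace of H. -/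
/-!
A vector separating for a von Neumann algebra `M` is cyclic for its commutant `M'`: the orthogonal
complement `L` of `M'Ψ` is stable under the self-adjoint set `M'`, so the projection onto `L`
lies in `M'' = M`; it annihilates `Ψ ∈ M'Ψ`, so it vanishes because `Ψ` is separating.

For `x ∈ M'`, `⟪x Ψ, (O k)* Φ⟫ = ⟪x (O k Ψ), Φ⟫ → 0`, so the limit `y` of `(O k)* Φ` is
orthogonal to `M'Ψ`, and therefore zero.
-/

open Filter Topology

/-- A closed subspace stable under a self-adjoint set of operators reduces it: the orthogonal
projection onto the subspace commutes with every operator of the set. -/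
lemma starProjection_mem_centralizer
    {H : Type*} [NormedAddCommGroup H] [InnerProductSpace ℂ H] [CompleteSpace H]
    (S : Set (H →L[ℂ] H)) (hS : ∀ x ∈ S, star x ∈ S)
    (L : Submodule ℂ H) [L.HasOrthogonalProjection] (hL : ∀ x ∈ S, ∀ v ∈ L, x v ∈ L) :
    L.starProjection ∈ Set.centralizer S := by
  intro x hx
  ext v
  change x (L.starProjection v) = L.starProjection (x v)
  refine (Submodule.eq_starProjection_of_mem_of_inner_eq_zero
    (hL x hx _ (L.starProjection_apply_mem v)) fun w hw => ?_).symm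
  rw [← map_sub, ← ContinuousLinearMap.adjoint_inner_right]
  exact L.starProjection_inner_eq_zero v _ (hL (star x) (hS x hx) w hw)

/-- A separating vector for `M = M''` is cyclic for `M'`, in dual form: a vector orthogonal to
`M'Ψ` is zero. -/
lemma eq_zero_of_orthogonal_commutant
    {H : Type*} [NormedAddCommGroup H] [InnerProductSpace ℂ H] [CompleteSpace H]
    (M : StarSubalgebra ℂ (H →L[ℂ] H))
    (hM : Set.centralizer (Set.centralizer (M : Set (H →L[ℂ] H)))
      = (M : Set (H →L[ℂ] H)))
    (Ψ : H) (hsep : IsSeparatingVector (M : Set (H →L[ℂ] H)) Ψ) (y : H)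
    (hy : ∀ x ∈ Set.centralizer (M : Set (H →L[ℂ] H)), inner ℂ (x Ψ) y = 0) : y = 0 := by
  set C := Set.centralizer (M : Set (H →L[ℂ] H)) with hC
  have hstar : ∀ x ∈ C, star x ∈ C := fun x hx =>
    Set.star_mem_centralizer' (fun a ha => star_mem (S := StarSubalgebra ℂ (H →L[ℂ] H)) ha) hx
  set L : Submodule ℂ H := (Submodule.span ℂ {v : H | ∃ x ∈ C, x Ψ = v})ᗮ with hLdef
  have memL : ∀ v, v ∈ L ↔ ∀ x ∈ C, inner ℂ (x Ψ) v = 0 := by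
    intro v
    rw [hLdef, Submodule.mem_orthogonal]
    refine ⟨fun h x hx => h _ (Submodule.subset_span ⟨x, hx, rfl⟩), fun h u hu => ?_⟩
    induction hu using Submodule.span_induction with
    | mem u hu => obtain ⟨x, hx, rfl⟩ := hu; exact h x hx
    | zero => simp
    | add a b _ _ ha hb => simp [inner_add_left, ha, hb]
    | smul c a _ ha => simp [inner_smul_left, ha]
  have hL : ∀ x ∈ C, ∀ v ∈ L, x v ∈ L := by
    intro z hz v hv
    rw [memL] at hv ⊢
    intro x hx
    rw [← ContinuousLinearMap.adjoint_inner_left]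
    exact hv (star z * x) (Set.mul_mem_centralizer (hstar z hz) hx)
  have hP : L.starProjection ∈ (M : Set (H →L[ℂ] H)) :=
    hM ▸ starProjection_mem_centralizer C hstar L hL
  have hPΨ : L.starProjection Ψ = 0 := by
    rw [Submodule.starProjection_apply_eq_zero_iff]
    exact Submodule.le_orthogonal_orthogonal _
      (Submodule.subset_span ⟨1, Set.one_mem_centralizer, rfl⟩)
  have hyL : L.starProjection y = y :=
    Submodule.starProjection_eq_self_iff.2 ((memL y).2 hy)
  have hP0 := hsep _ hP hPΨ
  rw [← hyL, hP0]
  rfl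

/-- Well-definedness of the relative Tomita operator `S_{Ψ|Φ}`: for a von Neumann algebra
`M` (a star-subalgebra containing the identity equal to its double commutant) with cyclic
and separating vector `Ψ`, if a sequence `(O_n)` in `M` satisfies `O_n Ψ → 0` and
`O_n* Φ → y`, then `y = 0`. -/
theorem tomita_operator_well_defined
    {H : Type*} [NormedAddCommGroup H] [InnerProductSpace ℂ H] [CompleteSpace H]
    (M : StarSubalgebra ℂ (H →L[ℂ] H))
    (hM : Set.centralizer (Set.centralizer (M : Set (H →L[ℂ] H)))
      = (M : Set (H →L[ℂ] H)))
    (Ψ : H)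
    (hcyc : IsCyclicVector (M : Set (H →L[ℂ] H)) Ψ)
    (hsep : IsSeparatingVector (M : Set (H →L[ℂ] H)) Ψ)
    (Φ : H) (O : ℕ → (H →L[ℂ] H)) (hO : ∀ k, O k ∈ M)
    (hΨ : Tendsto (fun k => O k Ψ) atTop (𝓝 0))
    (y : H) (hΦ : Tendsto (fun k => star (O k) Φ) atTop (𝓝 y)) :
    y = 0 := by
  refine eq_zero_of_orthogonal_commutant M hM Ψ hsep y fun x hx => ?_
  have h1 : Tendsto (fun k => inner ℂ (x Ψ) (star (O k) Φ)) atTop (𝓝 (inner ℂ (x Ψ) y)) :=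
    tendsto_const_nhds.inner hΦ
  have h2 : Tendsto (fun k => inner ℂ (x (O k Ψ)) Φ) atTop (𝓝 (inner ℂ (x 0) Φ)) :=
    ((x.continuous.tendsto 0).comp hΨ).inner tendsto_const_nhds
  rw [map_zero, inner_zero_left] at h2
  refine tendsto_nhds_unique h1 (h2.congr fun k => ?_)
  have hcomm : O k (x Ψ) = x (O k Ψ) := congrArg (fun T : H →L[ℂ] H => T Ψ) (hx (O k) (hO k))
  rw [← hcomm]
  exact (ContinuousLinearMap.adjoint_inner_right (O k) (x Ψ) Φ).symm
end
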